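/- arXiv:1505.03697 — 3 statements merged into one kernel-verified Lean document; each statement's English description precedes it below -/
import Mathlib

section
/- Let T ⊊ G be a tile in a finite abelian group G. Then there is a set A with T ⊊ A ⊂ G having the following property: for any d₀ ≥ 1, there exist d ≥ d₀ and a family F of at least d₀ pairwise disjoint subsets of A^d such that for every subfamily S ⊂ F with |S| ≡ 1 (mod |T|), the set G × (A^d \ ⋃_{S ∈ S} S) ⊂ G^{d+1} is T-tilable. -/
def IsCopy {G : Type*} [AddCommGroup G] {d : ℕ} (T : Set G)
    (S : Set (Fin d → G)) : Prop :=
  ∃ (j : Fin d) (y : Fin d → G),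
    S = {z | ∃ t ∈ T, z = Function.update y j (y j + t)}

def Tilable {G : Type*} [AddCommGroup G] {d : ℕ} (T : Set G)
    (X : Set (Fin d → G)) : Prop :=
  ∃ P : Set (Set (Fin d → G)),
    (∀ S ∈ P, IsCopy T S) ∧ P.PairwiseDisjoint id ∧ ⋃₀ P = X

/-!
Choose a translate `x + T` such that neither of `T` and `x + T` contains the other, and let
`A = T ∪ (x + T)`. The parts `T \ (x + T)`, `T ∩ (x + T)`, `(x + T) \ T` cut `A^d` into boxes
indexed by the grid `{0, 1, 2}^d`. The union of two adjacent boxes is a product with one factor `T`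
or `x + T`, hence tilable, so any set of boxes that is matchable in the grid has a tilable union.

The family consists of the boxes at `2δ_i`, for `i` in one part of the coordinates. Suppose that
those with `i ∈ X` are removed, where `|X| = m|T| + 1`. For every `a ∈ G` place copies of `a + T` in
the direction of `G` over `m` boxes at points `δ_j`, all `j` being distinct and outside `X`. Since
each `g ∈ G` lies in `|T|` of the translates `a + T`, this covers `|X| - 1` boxes in every slice
`{g} × A^d`. What is left of the slice is matchable: vectors with the same non-empty support
are matched by swapping `1` and `2` in a fixed coordinate, except that `0` is matched with `δ_i` for
one `i ∈ X`, and that every other `i ∈ X` is paired with some `j`, the plane spanned by `i` and `j`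
without `0`, `2δ_i` and `δ_j` having a perfect matching of its own.
-/

open Function Set SimpleGraph
open scoped Pointwise

section Matchings

variable {V W ι α : Type*} {H : SimpleGraph V}

/-- `S` is matchable in `H` if it is the vertex set of a matching of `H`, that is, if the subgraph
induced on `S` has a perfect matching. -/
def Matchable (H : SimpleGraph V) (S : Set V) : Prop :=
  ∃ M : H.Subgraph, M.IsMatching ∧ M.verts = S

namespace Matchable

theorem iUnion {κ : Type*} {S : κ → Set V} (hS : ∀ k, Matchable H (S k))
    (hd : Pairwise (Disjoint on S)) : Matchable H (⋃ k, S k) := by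
  choose M hM hMS using hS
  refine ⟨⨆ k, M k, .iSup hM fun k l hkl ↦ ?_, by simp [hMS]⟩
  simpa only [onFun, (hM _).support_eq_verts, hMS] using hd hkl

theorem union {S S' : Set V} (hS : Matchable H S) (hS' : Matchable H S') (hd : Disjoint S S') :
    Matchable H (S ∪ S') := by
  rw [union_eq_iUnion]
  exact iUnion (Bool.forall_bool.2 ⟨hS', hS⟩) (pairwise_disjoint_on_bool.2 hd)

theorem image {H' : SimpleGraph W} {S : Set V} (hS : Matchable H S) (f : H →g H')
    (hf : Injective f) : Matchable H' (f '' S) := by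
  obtain ⟨M, hM, rfl⟩ := hS
  exact ⟨M.map f, hM.map f hf, rfl⟩

theorem pair {u v : V} (h : H.Adj u v) : Matchable H {u, v} :=
  ⟨H.subgraphOfAdj h, .subgraphOfAdj h, rfl⟩

theorem of_involution {S : Set V} (f : V → V) (hfS : ∀ u ∈ S, f u ∈ S)
    (hff : ∀ u ∈ S, f (f u) = u) (hf : ∀ u ∈ S, H.Adj u (f u)) : Matchable H S := by
  refine ⟨{ verts := S, Adj := fun u v ↦ u ∈ S ∧ f u = v, adj_sub := ?_, edge_vert := And.left,
            symm.symm := ?_ }, fun u hu ↦ ⟨f u, ⟨hu, rfl⟩, fun v hv ↦ hv.2.symm⟩, rfl⟩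
  · rintro u _ ⟨hu, rfl⟩
    exact hf u hu
  · rintro u _ ⟨hu, rfl⟩
    exact ⟨hfS u hu, hff u hu⟩

end Matchable

/-- The box product of copies of `P` indexed by `ι`: two vectors are adjacent if they differ in
exactly one coordinate, and their entries there are adjacent in `P`. Mathlib's
`SimpleGraph.boxProd` is binary. -/
def boxPower (P : SimpleGraph α) (ι : Type*) : SimpleGraph (ι → α) where
  Adj u v := ∃ j, P.Adj (u j) (v j) ∧ ∀ i ≠ j, u i = v i
  symm.symm := fun _ _ ⟨j, hj, h⟩ ↦ ⟨j, hj.symm, fun i hi ↦ (h i hi).symm⟩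
  loopless.irrefl := fun _ ⟨_, hj, _⟩ ↦ P.irrefl hj

theorem boxPower_adj_update [DecidableEq ι] {P : SimpleGraph α} (u : ι → α) {j : ι} {a b : α}
    (h : P.Adj a b) : (boxPower P ι).Adj (update u j a) (update u j b) :=
  ⟨j, by simpa using h, fun i hi ↦ by simp [hi]⟩

/-- The grid `{0, 1, 2}^ι`, in which each coordinate moves along the path `0 - 1 - 2`. -/
abbrev grid (ι : Type*) : SimpleGraph (ι → Fin 3) := boxPower (pathGraph 3) ι

theorem pathGraph_three_adj_swap {a : Fin 3} (ha : a ≠ 0) :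
    (pathGraph 3).Adj a (Equiv.swap 1 2 a) := by
  rw [pathGraph_adj]
  revert a
  decide

theorem matchable_grid_support_eq {U : Set ι} (hU : U.Nonempty) :
    Matchable (grid ι) {u | Function.support u = U} := by
  classical
  obtain ⟨j, hj⟩ := hU
  have swap_eq_zero {a : Fin 3} : Equiv.swap 1 2 a = 0 ↔ a = 0 := by revert a; decide
  refine .of_involution (fun u ↦ update u j (Equiv.swap 1 2 (u j))) ?_ ?_ ?_
  · rintro u rfl
    ext i
    obtain rfl | hi := eq_or_ne i j
    · simp [swap_eq_zero]
    · simp [hi]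
  · simp
  · rintro u rfl
    simpa using boxPower_adj_update u (j := j) (pathGraph_three_adj_swap hj)

theorem matchable_grid_support_mem {𝒰 : Set (Set ι)} (h𝒰 : ∅ ∉ 𝒰) :
    Matchable (grid ι) {u | Function.support u ∈ 𝒰} := by
  have h : {u | Function.support u ∈ 𝒰} =
      ⋃ U : 𝒰, {u : ι → Fin 3 | Function.support u = U} := by ext; simp
  rw [h]
  refine .iUnion (fun U ↦ matchable_grid_support_eq ?_) fun U U' hUU' ↦ ?_
  · exact nonempty_iff_ne_empty.2 fun hU ↦ h𝒰 (hU ▸ U.2)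
  · exact disjoint_left.2 fun u hu hu' ↦ hUU' (Subtype.ext (hu.symm.trans hu'))

theorem matchable_boxProd_pathGraph_compl :
    Matchable ((pathGraph 3).boxProd (pathGraph 3)) {(0, 0), (2, 0), (0, 1)}ᶜ := by
  let f : Equiv.Perm (Fin 3 × Fin 3) :=
    .swap (1, 0) (1, 1) * .swap (1, 2) (0, 2) * .swap (2, 1) (2, 2)
  refine .of_involution f ?_ ?_ ?_ <;>
    simp only [mem_compl_iff, mem_insert_iff, mem_singleton_iff, boxProd_adj, pathGraph_adj] <;>
    decide

variable [DecidableEq ι]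

/-- The inclusion of the coordinate plane spanned by the coordinates `i` and `j` into the grid. It
transports matchings of a single `3 × 3` grid to all coordinate planes. -/
def planeHom {i j : ι} (hij : i ≠ j) : (pathGraph 3).boxProd (pathGraph 3) →g grid ι where
  toFun p := update (Pi.single i p.1) j p.2
  map_rel' := by
    rintro ⟨a, b⟩ ⟨a', b'⟩ (⟨h, rfl : b = b'⟩ | ⟨h, rfl : a = a'⟩)
    · simp only [Pi.single, update_comm hij]
      exact boxPower_adj_update _ h
    · exact boxPower_adj_update _ h

theorem planeHom_apply {i j : ι} (hij : i ≠ j) (p : Fin 3 × Fin 3) :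
    planeHom hij p = update (Pi.single i p.1) j p.2 := rfl

theorem planeHom_injective {i j : ι} (hij : i ≠ j) : Injective (planeHom hij) := by
  intro p q h
  have hi := congrFun h i
  have hj := congrFun h j
  simp only [planeHom_apply, update_self, update_of_ne hij, Pi.single_eq_same] at hi hj
  exact Prod.ext hi hj

theorem range_planeHom {i j : ι} (hij : i ≠ j) :
    range (planeHom hij) = {u | Function.support u ⊆ {i, j}} := by
  ext u
  simp only [support_subset_iff, mem_ofPred_eq, mem_range]
  constructor
  · rintro ⟨p, rfl⟩ k
    rw [planeHom_apply]
    grind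
  · intro hu
    refine ⟨(u i, u j), ?_⟩
    ext k : 1
    rw [planeHom_apply]
    grind

/-- The coordinate plane spanned by the coordinates `i` and `j` in the grid, minus the origin and
the points `2δ_i` and `δ_j`, where `δ_i` is the `i`-th unit vector. -/
def puncturedPlane (i j : ι) : Set (ι → Fin 3) :=
  {u | Function.support u ⊆ {i, j}} \ {0, Pi.single i 2, Pi.single j 1}

theorem matchable_puncturedPlane {i j : ι} (hij : i ≠ j) :
    Matchable (grid ι) (puncturedPlane i j) := by
  have h := matchable_boxProd_pathGraph_compl.image (planeHom hij) (planeHom_injective hij)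
  rw [image_compl_eq_range_sdiff_image (planeHom_injective hij), range_planeHom] at h
  have h0 : planeHom hij (0, 0) = 0 := by simp [planeHom_apply]
  have hi : planeHom hij (2, 0) = Pi.single i 2 := by simp [planeHom_apply, hij.symm]
  have hj : planeHom hij (0, 1) = Pi.single j 1 := by rw [planeHom_apply, Pi.single_zero, Pi.single]
  rwa [image_insert_eq, image_pair, h0, hi, hj] at h

theorem disjoint_puncturedPlane {i j i' j' : ι} (h : Disjoint ({i, j} : Set ι) {i', j'}) :
    Disjoint (puncturedPlane i j) (puncturedPlane i' j') :=
  Set.disjoint_left.2 fun _ hu hu' ↦ hu.2 <| .inl <| Function.support_eq_empty_iff.1 <|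
    subset_empty_iff.1 <| h.inter_eq ▸ subset_inter hu.1 hu'.1

theorem single_notMem_puncturedPlane {i j k : ι} {a : Fin 3} (hi : k = i → a = 2)
    (hj : k = j → a = 1) : Pi.single k a ∉ puncturedPlane i j := by
  rintro ⟨hu, hu'⟩
  simp only [mem_insert_iff, mem_singleton_iff, not_or] at hu'
  have hk : k ∈ Function.support (Pi.single k a) := by simpa using hu'.1
  obtain rfl | rfl := hu hk
  · exact hu'.2.1 (by rw [hi rfl])
  · exact hu'.2.2 (by rw [hj rfl])

theorem eq_single_of_support_eq {u : ι → Fin 3} {i : ι} (h : Function.support u = {i}) :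
    u = Pi.single i 1 ∨ u = Pi.single i 2 := by
  have hu : u = Pi.single i (u i) := by
    rw [Pi.single, eq_update_iff]
    exact ⟨rfl, fun k hk ↦ notMem_support.1 (h ▸ hk)⟩
  have hi : u i ≠ 0 := h.ge rfl
  have : u i = 1 ∨ u i = 2 := by lia
  exact this.imp (fun h ↦ by rwa [h] at hu) (fun h ↦ by rwa [h] at hu)

theorem compl_range_union_range_eq {κ : Type*} {p : Option κ → ι} {q : κ → ι}
    (hpq : ∀ o k, p o ≠ q k) :
    (range (fun o ↦ Pi.single (p o) 2) ∪ range fun k ↦ Pi.single (q k) 1)ᶜ =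
      {0, Pi.single (p none) 1} ∪
        {u : ι → Fin 3 | Function.support u ∈
          {U | U ≠ ∅ ∧ U ≠ {p none} ∧ ∀ k, ¬ U ⊆ {p (some k), q k}}} ∪
        ⋃ k, puncturedPlane (p (some k)) (q k) := by
  refine Subset.antisymm (fun u hu ↦ ?_) (subset_compl_comm.1 (union_subset ?_ ?_))
  · simp only [mem_compl_iff, mem_union, mem_range, not_or, not_exists] at hu
    by_cases h0 : u = 0
    · exact .inl (.inl (.inl h0))
    by_cases hk : ∃ k, Function.support u ⊆ {p (some k), q k}
    · obtain ⟨k, hk⟩ := hk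
      refine .inr (mem_iUnion.2 ⟨k, hk, ?_⟩)
      simp [h0, Ne.symm (hu.1 (some k)), Ne.symm (hu.2 k)]
    by_cases hn : Function.support u = {p none}
    · exact .inl (.inl (.inr ((eq_single_of_support_eq hn).resolve_right (Ne.symm (hu.1 none)))))
    · exact .inl (.inr ⟨mt Function.support_eq_empty_iff.1 h0, hn, not_exists.1 hk⟩)
  · refine range_subset_iff.2 fun o ↦ ?_
    simp only [mem_compl_iff, mem_union, mem_iUnion, not_or, not_exists]
    refine ⟨⟨?_, ?_⟩, fun k ↦ single_notMem_puncturedPlane (fun _ ↦ rfl) (absurd · (hpq o k))⟩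
    · rintro (h | h)
      · simp at h
      · grind [congrFun h (p o)]
    · simp only [mem_ofPred_eq, Pi.support_single_of_ne (show (2 : Fin 3) ≠ 0 by decide)]
      rintro ⟨-, hn, hk⟩
      cases o with
      | none => exact hn rfl
      | some k => exact hk k (by simp)
  · refine range_subset_iff.2 fun k ↦ ?_
    simp only [mem_compl_iff, mem_union, mem_iUnion, not_or, not_exists]
    refine ⟨⟨?_, ?_⟩, fun l ↦ single_notMem_puncturedPlane
      (absurd · (hpq (some l) k).symm) (fun _ ↦ rfl)⟩
    · rintro (h | h)
      · simp at h
      · grind [congrFun h (q k), hpq none k]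
    · simp only [mem_ofPred_eq, Pi.support_single_of_ne (show (1 : Fin 3) ≠ 0 by decide)]
      rintro ⟨-, -, hk⟩
      exact hk k (by simp)

theorem matchable_grid_compl_range_union_range {κ : Type*} {p : Option κ → ι} {q : κ → ι}
    (hp : Injective p) (hq : Injective q) (hpq : ∀ o k, p o ≠ q k) :
    Matchable (grid ι)
      (range (fun o ↦ Pi.single (p o) 2) ∪ range fun k ↦ Pi.single (q k) 1)ᶜ := by
  rw [compl_range_union_range_eq hpq]
  refine .union (.union (.pair ?_) (matchable_grid_support_mem ?_) ?_)
    (.iUnion (fun k ↦ matchable_puncturedPlane (hpq _ _)) fun k l hkl ↦ ?_) ?_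
  · rw [← update_eq_self (p none) (0 : ι → Fin 3), Pi.single]
    exact boxPower_adj_update 0 (by simp [pathGraph_adj])
  · simp
  · simp
  · apply disjoint_puncturedPlane
    have := hp.ne ((Option.some_injective _).ne hkl.symm)
    simp [this, hpq, (hpq _ _).symm, hq.ne hkl.symm]
  · rw [disjoint_iUnion_right]
    intro k
    have hk := hp.ne (Option.some_ne_none k).symm
    simp only [disjoint_union_left, disjoint_insert_left, Set.disjoint_singleton_left]
    exact ⟨⟨fun h ↦ h.2 (.inl rfl),
      single_notMem_puncturedPlane (absurd · hk) (absurd · (hpq _ _))⟩,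
      Set.disjoint_left.2 fun u hu hu' ↦ hu.2.2 k hu'.1⟩

end Matchings

section Boxes

variable {α ι L : Type*}

/-- The box with `j`-th factor `P (u j)`. If the sets `P l` partition `A`, then these boxes
partition `A^ι`. -/
def box (P : L → Set α) (u : ι → L) : Set (ι → α) := univ.pi fun j ↦ P (u j)

theorem pairwise_disjoint_box {P : L → Set α} (hP : Pairwise (Disjoint on P)) :
    Pairwise (Disjoint on (box P : (ι → L) → Set (ι → α))) := by
  intro u v huv
  obtain ⟨j, hj⟩ := ne_iff.1 huv
  exact disjoint_univ_pi.2 ⟨j, hP hj⟩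

theorem iUnion_box (P : L → Set α) :
    ⋃ u : ι → L, box P u = univ.pi fun _ ↦ ⋃ l, P l :=
  iUnion_univ_pi fun _ ↦ P

/-- The three parts of `S ∪ S'`, ordered so that the first two make up `S` and the last two make up
`S'`, as adjacent boxes should have a tilable union. -/
def venn (S S' : Set α) : Fin 3 → Set α := ![S \ S', S ∩ S', S' \ S]

theorem pairwise_disjoint_venn (S S' : Set α) : Pairwise (Disjoint on venn S S') := by
  intro k l hkl
  fin_cases k <;> fin_cases l <;>
    simp_all [venn, Set.disjoint_left]

theorem iUnion_venn (S S' : Set α) : ⋃ k, venn S S' k = S ∪ S' := by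
  ext a
  simp only [venn, mem_iUnion, Fin.exists_fin_succ, IsEmpty.exists_iff, or_false]
  change a ∈ S \ S' ∨ a ∈ S ∩ S' ∨ a ∈ S' \ S ↔ _
  grind

theorem venn_union_venn {S S' : Set α} {k l : Fin 3} (h : (pathGraph 3).Adj k l) :
    venn S S' k ∪ venn S S' l = S ∨ venn S S' k ∪ venn S S' l = S' := by
  have h01 : S \ S' ∪ S ∩ S' = S := sdiff_union_inter S S'
  have h12 : S ∩ S' ∪ S' \ S = S' := by rw [inter_comm, inter_union_sdiff]
  rw [pathGraph_adj] at h
  fin_cases k <;> fin_cases l <;>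
    simp [venn, union_comm (S ∩ S') (S \ S'), union_comm (S' \ S) (S ∩ S'), h01, h12] at h ⊢

/-- The box in `(S ∪ S')^ι` with `i`-th factor `S' \ S` and all other factors `S \ S'`. Such boxes
form the family of removable sets. -/
def corner [DecidableEq ι] (S S' : Set α) (i : ι) : Set (ι → α) := box (venn S S') (Pi.single i 2)

variable [DecidableEq ι] {S S' : Set α}

theorem corner_subset (i : ι) : corner S S' i ⊆ {w | ∀ j, w j ∈ S ∪ S'} := fun w hw j ↦ by
  rw [← iUnion_venn]
  exact mem_iUnion_of_mem _ (hw j trivial)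

theorem pi_single_left_injective {M : Type*} [Zero M] {a : M} (ha : a ≠ 0) :
    Injective fun i : ι ↦ (Pi.single i a : ι → M) := fun i j h ↦
  singleton_injective (by simpa [ha] using congrArg Function.support h)

theorem pairwise_disjoint_corner : Pairwise (Disjoint on (corner S S' : ι → Set (ι → α))) :=
  (pairwise_disjoint_box (pairwise_disjoint_venn S S')).comp_of_injective
    (pi_single_left_injective (by decide))

theorem corner_nonempty (h : ¬ S ⊆ S') (h' : ¬ S' ⊆ S) (i : ι) : (corner S S' i).Nonempty := by
  refine univ_pi_nonempty_iff.2 fun j ↦ ?_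
  obtain rfl | hj := eq_or_ne j i
  · simpa [venn, sdiff_nonempty] using h'
  · simpa [venn, hj, sdiff_nonempty] using h

theorem corner_injective (h : ¬ S ⊆ S') (h' : ¬ S' ⊆ S) :
    Injective (corner S S' : ι → Set (ι → α)) := fun i j hij ↦
  pairwise_disjoint_corner.eq fun hd ↦ by
    rw [onFun, hij, disjoint_self] at hd
    exact (corner_nonempty h h' j).ne_empty hd

theorem forall_mem_sdiff_biUnion_corner (X : Set ι) :
    {w : ι → α | ∀ j, w j ∈ S ∪ S'} \ ⋃ i ∈ X, corner S S' i =
      ⋃ u ∈ ((fun i ↦ Pi.single i 2) '' X)ᶜ, box (venn S S') u := by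
  have hA : {w : ι → α | ∀ j, w j ∈ S ∪ S'} = ⋃ u ∈ univ, box (venn S S') u := by
    rw [biUnion_univ, iUnion_box, iUnion_venn]
    ext
    simp
  have hX : ⋃ i ∈ X, corner S S' i = ⋃ u ∈ (fun i ↦ Pi.single i 2) '' X, box (venn S S') u := by
    rw [biUnion_image]
    rfl
  rw [hA, hX, compl_eq_univ_sdiff]
  exact biUnion_sdiff_biUnion_eq <|
    (pairwise_disjoint_box (pairwise_disjoint_venn S S')).set_pairwise _

end Boxes

section Tilings

variable {G : Type*} [AddCommGroup G] {d : ℕ} {T : Set G}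

namespace Tilable

theorem iUnion {κ : Type*} {X : κ → Set (Fin d → G)} (hX : ∀ k, Tilable T (X k))
    (hd : Pairwise (Disjoint on X)) : Tilable T (⋃ k, X k) := by
  choose P hP hPd hPX using hX
  refine ⟨⋃ k, P k, by simpa using fun S k ↦ hP k S, ?_, by simp [sUnion_iUnion, hPX]⟩
  intro S hS S' hS' hne
  obtain ⟨⟨k, hS⟩, l, hS'⟩ := mem_iUnion.1 hS, mem_iUnion.1 hS'
  obtain rfl | hkl := eq_or_ne k l
  · exact hPd k hS hS' hne
  · exact (hd hkl).mono (hPX k ▸ subset_sUnion_of_mem hS) (hPX l ▸ subset_sUnion_of_mem hS')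

theorem union {X X' : Set (Fin d → G)} (hX : Tilable T X) (hX' : Tilable T X')
    (hd : Disjoint X X') : Tilable T (X ∪ X') := by
  rw [union_eq_iUnion]
  exact iUnion (Bool.forall_bool.2 ⟨hX', hX⟩) (pairwise_disjoint_on_bool.2 hd)

theorem slice {X : Set (Fin d → G)} (hX : Tilable T X) (g : G) :
    Tilable T {z : Fin (d + 1) → G | z 0 = g ∧ Fin.tail z ∈ X} := by
  have hcons : {z : Fin (d + 1) → G | z 0 = g ∧ Fin.tail z ∈ X} =
      Fin.cons (α := fun _ ↦ G) g '' X := by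
    ext z
    constructor
    · rintro ⟨rfl, hz⟩
      exact ⟨_, hz, Fin.cons_self_tail z⟩
    · rintro ⟨w, hw, rfl⟩
      exact ⟨rfl, hw⟩
  obtain ⟨P, hP, hPd, rfl⟩ := hX
  refine ⟨image (Fin.cons (α := fun _ ↦ G) g) '' P, ?_, ?_, by rw [hcons, image_sUnion]⟩
  · rintro _ ⟨S, hS, rfl⟩
    obtain ⟨j, y, rfl⟩ := hP S hS
    refine ⟨j.succ, Fin.cons g y, ?_⟩
    ext z
    simp [← Fin.cons_update, eq_comm]
  · rintro _ ⟨S, hS, rfl⟩ _ ⟨S', hS', rfl⟩ hne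
    exact (disjoint_image_iff (Fin.cons_right_injective (α := fun _ ↦ G) g)).2
      (hPd hS hS' (ne_of_apply_ne _ hne))

end Tilable

theorem tilable_univ_pi {s : Fin d → Set G} {j : Fin d} {b : G} (hj : s j = b +ᵥ T) :
    Tilable T (univ.pi s) := by
  have mem_base {y : Fin d → G} :
      y ∈ univ.pi (update s j {b}) ↔ y j = b ∧ ∀ i ≠ j, y i ∈ s i := by
    simp [forall_update_iff s fun i A ↦ y i ∈ A]
  refine ⟨(fun y ↦ {z | ∃ t ∈ T, z = update y j (y j + t)}) '' univ.pi (update s j {b}),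
    ?_, ?_, ?_⟩
  · rintro _ ⟨y, -, rfl⟩
    exact ⟨j, y, rfl⟩
  · rintro _ ⟨y, hy, rfl⟩ _ ⟨y', hy', rfl⟩ hne
    refine Set.disjoint_left.2 ?_
    rintro _ ⟨t, -, rfl⟩ ⟨t', -, h⟩
    have hyy' : y ≠ y' := fun h ↦ hne (by rw [h])
    refine hyy' (funext fun i ↦ ?_)
    obtain rfl | hij := eq_or_ne i j
    · rw [(mem_base.1 hy).1, (mem_base.1 hy').1]
    · simpa [hij] using congrFun h i
  · ext z
    simp only [sUnion_image, mem_iUnion₂, exists_prop, mem_base, mem_univ_pi, mem_ofPred_eq]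
    constructor
    · rintro ⟨y, ⟨rfl, hy⟩, t, ht, rfl⟩
      refine (forall_update_iff y fun i g ↦ g ∈ s i).2 ⟨?_, hy⟩
      exact hj ▸ vadd_mem_vadd_set ht
    · intro hz
      obtain ⟨t, ht, htz⟩ := mem_vadd_set.1 (hj ▸ hz j)
      rw [vadd_eq_add] at htz
      exact ⟨update z j b, by simp +contextual [hz], t, ht, by simp [htz]⟩

theorem tilable_setOf_zero_mem_vadd (a : G) (X : Set (Fin d → G)) :
    Tilable T {z : Fin (d + 1) → G | z 0 ∈ a +ᵥ T ∧ Fin.tail z ∈ X} := by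
  have h : {z : Fin (d + 1) → G | z 0 ∈ a +ᵥ T ∧ Fin.tail z ∈ X} =
      ⋃ w : X, univ.pi (Fin.cons (α := fun _ ↦ Set G) (a +ᵥ T) fun j ↦ {w.1 j}) := by
    ext z
    simp [Fin.forall_fin_succ, ← funext_iff, ← Fin.tail_def]
  rw [h]
  refine .iUnion (fun w ↦ tilable_univ_pi (j := 0) (Fin.cons_zero _ _)) fun w w' hw ↦ ?_
  refine Set.disjoint_left.2 fun z hz hz' ↦ hw (Subtype.ext (funext fun j ↦ ?_))
  exact (hz j.succ trivial).symm.trans (hz' j.succ trivial)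

theorem tilable_singleton (s : G) (X : Set (Fin (d + 1) → G)) : Tilable {s} X := by
  rw [← iUnion_of_singleton_coe X]
  refine .iUnion (fun z ↦ ?_) fun z w hzw ↦ by simpa [Subtype.ext_iff] using hzw
  rw [← univ_pi_singleton]
  exact tilable_univ_pi (j := 0) (b := z.1 0 - s) (by simp)

theorem Matchable.tilable_biUnion {V : Type*} {H : SimpleGraph V} {S : Set V}
    (hS : Matchable H S) {c : V → Set (Fin d → G)} (hc : Pairwise (Disjoint on c))
    (hH : ∀ u v, H.Adj u v → Tilable T (c u ∪ c v)) : Tilable T (⋃ u ∈ S, c u) := by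
  obtain ⟨M, hM, rfl⟩ := hS
  have hcM : ⋃ u ∈ M.verts, c u = ⋃ e : M.edgeSet, ⋃ u ∈ (e : Sym2 V), c u := by
    rw [hM.verts_eq_biUnion_edgeSet]
    simp
  rw [hcM]
  refine .iUnion ?_ ?_
  · rintro ⟨⟨u, v⟩, huv⟩
    simpa [iUnion_or, iUnion_union_distrib] using hH u v (M.adj_sub huv)
  · rintro ⟨e, he⟩ ⟨e', he'⟩ hee'
    simp only [onFun, disjoint_iUnion_left, disjoint_iUnion_right]
    rintro u ⟨v, rfl⟩ u' ⟨v', rfl⟩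
    refine hc fun huu' ↦ hee' ?_
    subst huu'
    exact Subtype.ext (congrArg (s(_, ·)) (hM.eq_of_adj_left he he'))

theorem tilable_cylinder {V κ : Type*} {H : SimpleGraph V} {c : V → Set (Fin d → G)}
    (hc : Pairwise (Disjoint on c)) (hH : ∀ u v, H.Adj u v → Tilable T (c u ∪ c v))
    {R : Set V} {y : κ → V} (hy : Injective y) (hyR : ∀ k, y k ∈ R) (a : κ → G)
    (hR : ∀ g, Matchable H (R \ y '' {k | g ∈ a k +ᵥ T})) :
    Tilable T {z : Fin (d + 1) → G | Fin.tail z ∈ ⋃ u ∈ R, c u} := by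
  let upright (k : κ) : Set (Fin (d + 1) → G) := {z | z 0 ∈ a k +ᵥ T ∧ Fin.tail z ∈ c (y k)}
  let flat (g : G) : Set (Fin (d + 1) → G) :=
    {z | z 0 = g ∧ Fin.tail z ∈ ⋃ u ∈ R \ y '' {k | g ∈ a k +ᵥ T}, c u}
  have eq_of_mem {u v : V} {w : Fin d → G} (hu : w ∈ c u) (hv : w ∈ c v) : u = v :=
    hc.eq (not_disjoint_iff.2 ⟨w, hu, hv⟩)
  have h : {z : Fin (d + 1) → G | Fin.tail z ∈ ⋃ u ∈ R, c u} = (⋃ k, upright k) ∪ ⋃ g, flat g := by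
    ext z
    simp only [upright, flat, mem_ofPred_eq, mem_union, mem_iUnion, exists_prop, exists_eq_left',
      mem_sdiff, mem_image]
    grind
  rw [h]
  refine .union (.iUnion (fun k ↦ tilable_setOf_zero_mem_vadd _ _) fun k l hkl ↦ ?_)
    (.iUnion (fun g ↦ ((hR g).tilable_biUnion hc hH).slice g) fun g g' hg ↦ ?_) ?_
  · exact Set.disjoint_left.2 fun z hz hz' ↦ hkl (hy (eq_of_mem hz.2 hz'.2))
  · exact Set.disjoint_left.2 fun z hz hz' ↦ hg (hz.1.symm.trans hz'.1)
  · simp only [disjoint_iUnion_left, disjoint_iUnion_right]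
    refine fun g k ↦ Set.disjoint_left.2 fun z hz hz' ↦ ?_
    obtain ⟨u, hu, hzu⟩ := mem_iUnion₂.1 hz'.2
    exact hu.2 ⟨k, hz'.1 ▸ hz.1, eq_of_mem hz.2 hzu⟩

theorem tilable_box_union_box {L : Type*} {H : SimpleGraph L} {P : L → Set G}
    (hP : ∀ k l, H.Adj k l → ∃ b : G, P k ∪ P l = b +ᵥ T) {u v : Fin d → L}
    (huv : (boxPower H (Fin d)).Adj u v) : Tilable T (box P u ∪ box P v) := by
  obtain ⟨j, hj, h⟩ := huv
  obtain ⟨b, hb⟩ := hP _ _ hj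
  have hbox : box P u ∪ box P v = univ.pi (update (fun i ↦ P (u i)) j (P (u j) ∪ P (v j))) := by
    ext z
    simp only [box, mem_union, mem_univ_pi, forall_update_iff _ fun i A ↦ z i ∈ A]
    grind
  rw [hbox]
  exact tilable_univ_pi (by rw [update_self, hb])

theorem exists_vadd_not_subset [Finite G] (hT : T.Nonempty) (hT' : T ≠ univ) :
    ∃ x : G, ¬ x +ᵥ T ⊆ T ∧ ¬ T ⊆ x +ᵥ T := by
  obtain ⟨t, ht⟩ := hT
  obtain ⟨s, hs⟩ := (ne_univ_iff_exists_notMem T).1 hT'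
  have hsub : ¬ (s - t) +ᵥ T ⊆ T := fun h ↦ hs (by simpa using h (vadd_mem_vadd_set ht))
  refine ⟨s - t, hsub, fun h ↦ hsub ?_⟩
  exact (eq_of_subset_of_ncard_le h (ncard_vadd_set _ _).le).ge

theorem tilable_cylinder_sdiff {κ : Type*} (x : G) {X : Set (Fin d)} {f : κ → Fin d}
    (hf : Injective f) (hfX : ∀ k, f k ∉ X) (a : κ → G)
    (hX : ∀ g, {k | g ∈ a k +ᵥ T}.ncard + 1 = X.ncard) :
    Tilable T {z : Fin (d + 1) → G | Fin.tail z ∈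
      {w : Fin d → G | ∀ j, w j ∈ T ∪ (x +ᵥ T)} \ ⋃ i ∈ X, corner T (x +ᵥ T) i} := by
  have hvenn (k l : Fin 3) (h : (pathGraph 3).Adj k l) :
      ∃ b : G, venn T (x +ᵥ T) k ∪ venn T (x +ᵥ T) l = b +ᵥ T :=
    (venn_union_venn h).elim (fun h ↦ ⟨0, by rw [h, zero_vadd]⟩) fun h ↦ ⟨x, h⟩
  have : Finite κ := .of_injective f hf
  rw [forall_mem_sdiff_biUnion_corner]
  refine tilable_cylinder (H := grid (Fin d)) (y := fun k ↦ Pi.single (f k) 1)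
    (pairwise_disjoint_box (pairwise_disjoint_venn _ _)) (fun u v ↦ tilable_box_union_box hvenn)
    ((pi_single_left_injective (by decide)).comp hf) (fun k ↦ ?_) a fun g ↦ ?_
  · rintro ⟨i, -, h⟩
    grind [congrFun h (f k)]
  · have hcard : Nat.card (Option {k | g ∈ a k +ᵥ T}) = Nat.card X := by
      rw [Finite.card_option, Nat.card_coe_set_eq, hX, Nat.card_coe_set_eq]
    obtain ⟨e⟩ := Finite.card_eq.1 hcard
    have hrange : range (fun o ↦ (Pi.single (e o).1 2 : Fin d → Fin 3)) =
        (fun i ↦ Pi.single i 2) '' X := by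
      rw [image_eq_range, ← e.surjective.range_comp]
      rfl
    rw [sdiff_eq, ← compl_union, ← hrange, image_eq_range]
    exact matchable_grid_compl_range_union_range (Subtype.val_injective.comp e.injective)
      (hf.comp Subtype.val_injective) fun o k h ↦ hfX k (h ▸ (e o).2)

theorem ncard_setOf_mem_vadd (g : G) : {h : G | g ∈ h +ᵥ T}.ncard = T.ncard := by
  have h : {h : G | g ∈ h +ᵥ T} = Equiv.subLeft g ⁻¹' T := by
    ext h
    simp [mem_vadd_set_iff_neg_vadd_mem, sub_eq_neg_add]
  rw [h, ← Equiv.image_symm_eq_preimage, ncard_image_of_injective _ (Equiv.injective _)]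

theorem tilable_cylinder_sdiff_of_modEq [Finite G] (hT : T.Nonempty) (x : G) {N : ℕ}
    {f : Fin N × G → Fin d} (hf : Injective f) {X : Set (Fin d)} (hfX : ∀ k, f k ∉ X)
    (hXN : X.ncard ≤ N) (hX : X.ncard ≡ 1 [MOD T.ncard]) :
    Tilable T {z : Fin (d + 1) → G | Fin.tail z ∈
      {w : Fin d → G | ∀ j, w j ∈ T ∪ (x +ᵥ T)} \ ⋃ i ∈ X, corner T (x +ᵥ T) i} := by
  obtain rfl | hX0 := X.eq_empty_or_nonempty
  · obtain ⟨s, rfl⟩ : ∃ s, T = {s} := by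
      rw [← ncard_eq_one]
      rw [ncard_empty] at hX
      exact Nat.dvd_one.1 ((Nat.modEq_zero_iff_dvd).1 hX.symm)
    exact tilable_singleton s _
  · have hXpos : 0 < X.ncard := (ncard_pos (toFinite X)).2 hX0
    obtain ⟨m, hm⟩ := (Nat.modEq_iff_dvd' hXpos).1 hX.symm
    have hmN : m ≤ N := by
      have := (ncard_pos (toFinite T)).2 hT
      have := Nat.le_mul_of_pos_left m this
      lia
    refine tilable_cylinder_sdiff x (f := fun k : Fin m × G ↦ f (Fin.castLE hmN k.1, k.2))
      ?_ (fun k ↦ hfX _) Prod.snd fun g ↦ ?_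
    · exact hf.comp ((Fin.castLE_injective hmN).prodMap injective_id)
    · have h : {k : Fin m × G | g ∈ k.2 +ᵥ T} = univ ×ˢ {h | g ∈ h +ᵥ T} := by ext; simp
      rw [h, ncard_prod, ncard_setOf_mem_vadd, ncard_univ, Nat.card_fin, mul_comm, ← hm]
      exact Nat.sub_add_cancel hXpos

end Tilings

/-- for any proper tile `T ⊊ G` in a finite abelian group,
there is `A` with `T ⊊ A ⊆ G` such that for any `d₀ ≥ 1` there are `d ≥ d₀`
and a family `F` of at least `d₀` pairwise disjoint subsets of `A^d` so that
`G × (A^d \ ⋃_{S ∈ 𝒮} S)` is `T`-tilable whenever `𝒮 ⊆ F` has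
`|𝒮| ≡ 1 (mod |T|)`. -/
theorem constructDenser {G : Type*} [AddCommGroup G] [Fintype G]
    (T : Set G) (hTne : T.Nonempty) (hTprop : T ≠ Set.univ) :
    ∃ A : Set G, T ⊂ A ∧
      ∀ d₀ : ℕ, 1 ≤ d₀ →
        ∃ d : ℕ, d₀ ≤ d ∧
          ∃ F : Finset (Set (Fin d → G)),
            d₀ ≤ F.card ∧
            (∀ S ∈ F, S ⊆ {z : Fin d → G | ∀ j, z j ∈ A}) ∧
            ((F : Set (Set (Fin d → G))).PairwiseDisjoint id) ∧
            (∀ 𝒮 : Finset (Set (Fin d → G)), 𝒮 ⊆ F →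
              𝒮.card % T.ncard = 1 % T.ncard →
              Tilable T
                {z : Fin (d + 1) → G |
                  Fin.tail z ∈
                    ({w : Fin d → G | ∀ j, w j ∈ A} \ ⋃ S ∈ 𝒮, S)}) := by
  obtain ⟨x, hx, hx'⟩ := exists_vadd_not_subset hTne hTprop
  refine ⟨T ∪ (x +ᵥ T), ssubset_union_left_iff.2 hx, fun d₀ _ ↦ ?_⟩
  let e := Fintype.equivFin (Fin d₀ ⊕ Fin d₀ × G)
  have hl := e.injective.comp Sum.inl_injective
  have hr := e.injective.comp Sum.inr_injective
  have hF := (corner_injective hx' hx).comp hl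
  refine ⟨_, by simp, Finset.univ.map ⟨_, hF⟩, by simp, ?_, ?_, fun 𝒮 h𝒮 hcard ↦ ?_⟩
  · simpa using fun i ↦ corner_subset (S := T) (S' := x +ᵥ T) (e (.inl i))
  · rw [Finset.coe_map, Finset.coe_univ, image_univ]
    exact pairwiseDisjoint_range_iff.2 fun i j hij ↦
      pairwise_disjoint_corner (ne_of_apply_ne (corner T (x +ᵥ T)) hij)
  · obtain ⟨I, -, rfl⟩ := Finset.subset_map_iff.1 h𝒮
    rw [Finset.card_map] at hcard
    have hI : ((e ∘ Sum.inl) '' I).ncard = I.card := by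
      rw [ncard_image_of_injective _ hl, ncard_coe_finset]
    have h := tilable_cylinder_sdiff_of_modEq hTne x hr (X := (e ∘ Sum.inl) '' I) (by simp)
      (hI.trans_le (card_finset_fin_le I)) (by rwa [hI])
    simpa using h
end

section
/- Let G, G₁, ..., G_m, H₁, ..., H_n be abelian groups with tiles A ⊂ B ⊂ C ⊂ G, T_i ⊂ B_i ⊂ G_i, and U_i ⊂ C_i ⊂ H_i. Suppose B₁ × ⋯ × B_m × B is (T₁, ..., T_m, A)-tilable, and C₁ × ⋯ × C_n × C^d is (U₁, ..., U_n, B, ..., B)-tilable (with d copies of B). Then B₁ × ⋯ × B_m × C₁ × ⋯ × C_n × C^d is (T₁, ..., T_m, U₁, ..., U_n, A, ..., A)-tilable (with d copies of A). -/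
universe u

/-- A copy of the tile `T j ⊆ G j` in the product `Π i, G i`, placed in
coordinate `j` and translated by `y`. -/
def IsCopyD {ι : Type*} [DecidableEq ι] {G : ι → Type*}
    [∀ i, AddCommGroup (G i)] (T : ∀ i, Set (G i))
    (S : Set (∀ i, G i)) : Prop :=
  ∃ (j : ι) (y : ∀ i, G i),
    S = {z | ∃ t ∈ T j, z = Function.update y j (y j + t)}

/-- `X` is `(T₁, …)`-tilable: it partitions into copies of the tiles `T i`,
each placed in its own coordinate. -/
def TilableD {ι : Type*} [DecidableEq ι] {G : ι → Type*}
    [∀ i, AddCommGroup (G i)] (T : ∀ i, Set (G i))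
    (X : Set (∀ i, G i)) : Prop :=
  ∃ P : Set (Set (∀ i, G i)),
    (∀ S ∈ P, IsCopyD T S) ∧ P.PairwiseDisjoint id ∧ ⋃₀ P = X

instance sumElimAddCommGroup {α β : Type*} (F : α → Type u) (G : β → Type u)
    [∀ a, AddCommGroup (F a)] [∀ b, AddCommGroup (G b)] :
    ∀ i : α ⊕ β, AddCommGroup (Sum.elim F G i) := fun i =>
  match i with
  | .inl a => inferInstanceAs (AddCommGroup (F a))
  | .inr b => inferInstanceAs (AddCommGroup (G b))

/-!
Cut `B₁ × ⋯ × B_m × (C₁ × ⋯ × C_n × C^d)` into the slabs `B₁ × ⋯ × B_m × S`, where `S` runs over the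
copies in the given tiling of the second factor. If `S` is a copy of some `U_i`, the slab is a
disjoint union of translates of `S`. If `S` is a copy of `B` in the `j`-th of the last `d`
directions, the slab is the image of `B₁ × ⋯ × B_m × B` under an embedding sending the last
coordinate to the line carrying `S`; this embedding takes copies of the `T_i` to copies of the `T_i`
and copies of `A` to copies of `A`, so it transports the other given tiling.
-/

section Copies

variable {ι κ : Type*} [DecidableEq ι] [DecidableEq κ] {G : ι → Type*} {H : κ → Type*}
  [∀ i, AddCommGroup (G i)] [∀ k, AddCommGroup (H k)]

/-- The line through `y` in direction `j`, parametrised by the `j`-th factor. Copies of `T j` are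
exactly its images under such lines. -/
def coordLine (y : ∀ i, G i) (j : ι) (t : G j) : ∀ i, G i :=
  Function.update y j (y j + t)

theorem coordLine_injective (y : ∀ i, G i) (j : ι) : Function.Injective (coordLine y j) :=
  (Function.update_injective y j).comp (add_right_injective (y j))

theorem coordLine_coordLine_self (y : ∀ i, G i) (j : ι) (s t : G j) :
    coordLine (coordLine y j s) j t = coordLine y j (s + t) := by
  simp only [coordLine, Function.update_self, Function.update_idem, add_assoc]

theorem isCopyD_iff_exists_image_coordLine {T : ∀ i, Set (G i)} {S : Set (∀ i, G i)} :
    IsCopyD T S ↔ ∃ j y, S = coordLine y j '' T j := by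
  simp only [IsCopyD, Set.image, coordLine, eq_comm]

theorem isCopyD_image_coordLine (T : ∀ i, Set (G i)) (y : ∀ i, G i) (j : ι) :
    IsCopyD T (coordLine y j '' T j) :=
  isCopyD_iff_exists_image_coordLine.2 ⟨j, y, rfl⟩

theorem TilableD.congr_tiles {T T' : ∀ i, Set (G i)} {X : Set (∀ i, G i)} (h : TilableD T X)
    (hT : ∀ i, T i = T' i) : TilableD T' X :=
  funext hT ▸ h

theorem IsCopyD.tilableD {T : ∀ i, Set (G i)} {S : Set (∀ i, G i)} (h : IsCopyD T S) :
    TilableD T S :=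
  ⟨{S}, by simpa using h, Set.pairwiseDisjoint_singleton S id, Set.sUnion_singleton S⟩

theorem TilableD.biUnion {T : ∀ i, Set (G i)} {σ : Type*} {I : Set σ} {X : σ → Set (∀ i, G i)}
    (hdisj : I.PairwiseDisjoint X) (h : ∀ s ∈ I, TilableD T (X s)) :
    TilableD T (⋃ s ∈ I, X s) := by
  choose! P hcopy hPdisj hPX using h
  refine ⟨⋃ s ∈ I, P s, ?_, Set.PairwiseDisjoint.biUnion ?_ hPdisj, ?_⟩
  · intro S hS
    obtain ⟨s, hs, hSs⟩ := Set.mem_iUnion₂.1 hS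
    exact hcopy s hs S hSs
  · intro s hs s' hs' hne
    simpa only [Function.onFun, id, ← Set.sUnion_eq_biUnion, Set.iSup_eq_iUnion,
      hPX s hs, hPX s' hs'] using hdisj hs hs' hne
  · simpa only [Set.sUnion_iUnion] using Set.iUnion₂_congr hPX

theorem TilableD.image {T : ∀ i, Set (G i)} {V : ∀ k, Set (H k)} {X : Set (∀ i, G i)}
    (h : TilableD T X) {f : (∀ i, G i) → ∀ k, H k} (hf : Function.Injective f)
    (hcopy : ∀ S, IsCopyD T S → IsCopyD V (f '' S)) : TilableD V (f '' X) := by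
  obtain ⟨P, hP, hdisj, rfl⟩ := h
  refine ⟨Set.image f '' P, Set.forall_mem_image.2 fun S hS => hcopy S (hP S hS), ?_,
    Set.image_sUnion.symm⟩
  rw [hf.image_injective.injOn.pairwiseDisjoint_image]
  exact fun S hS S' hS' hne => (Set.disjoint_image_iff hf).2 (hdisj hS hS' hne)

/-- The subset `B` of a single group, as a subset of the product of the one-element family. -/
def unitBox {E : Type*} (B : Set E) : Set (Unit → E) :=
  {v | v () ∈ B}

theorem isCopyD_unitBox {E : Type*} [AddCommGroup E] (B : Set E) :
    IsCopyD (fun _ : Unit => B) (unitBox B) := by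
  refine isCopyD_iff_exists_image_coordLine.2 ⟨(), 0, ?_⟩
  ext v
  constructor
  · exact fun hv => ⟨v (), hv, funext fun _ => by simp [coordLine]⟩
  · rintro ⟨t, ht, rfl⟩
    simpa [unitBox, coordLine] using ht

theorem image_coordLine_unitBox (y : ∀ i, G i) (j : ι) (B : Set (G j)) :
    (fun v => coordLine y j (v ())) '' unitBox B = coordLine y j '' B := by
  have heval : (fun v : Unit → G j => v ()) '' unitBox B = B :=
    Set.image_preimage_eq B (Function.surjective_eval ())
  rw [← Set.image_image (coordLine y j) fun v : Unit → G j => v (), heval]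

theorem IsCopyD.image_coordLine_unit {T : ∀ i, Set (G i)} {j : ι} {S : Set (Unit → G j)}
    (h : IsCopyD (fun _ => T j) S) (y : ∀ i, G i) :
    IsCopyD T ((fun v => coordLine y j (v ())) '' S) := by
  obtain ⟨⟨⟩, v, rfl⟩ := isCopyD_iff_exists_image_coordLine.1 h
  have hline (t : G j) :
      coordLine y j (coordLine v () t ()) = coordLine (coordLine y j (v ())) j t := by
    rw [coordLine_coordLine_self]
    simp only [coordLine, Function.update_self]
  simpa only [Set.image_image, hline] using isCopyD_image_coordLine T (coordLine y j (v ())) j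

end Copies

section SumFamilies

variable {α β : Type*} {F : α → Type u} {K : β → Type u}

/-- The identification of `(Π a, F a) × (Π b, K b)` with the product of the family
`Sum.elim F K`. -/
def glue (x : ∀ a, F a) (y : ∀ b, K b) : ∀ i, Sum.elim F K i :=
  Sum.rec x y

/-- The family of tiles listing first the tiles `T` and then the tiles `V`. -/
def sumTiles (T : ∀ a, Set (F a)) (V : ∀ b, Set (K b)) : ∀ i, Set (Sum.elim F K i) :=
  Sum.rec T V

/-- The product `W × Y`, as a subset of the product of the family `Sum.elim F K`. -/
def sumProd (W : Set (∀ a, F a)) (Y : Set (∀ b, K b)) : Set (∀ i, Sum.elim F K i) :=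
  {z | (fun a => z (.inl a)) ∈ W ∧ (fun b => z (.inr b)) ∈ Y}

theorem glue_injective2 : Function.Injective2 (glue : (∀ a, F a) → (∀ b, K b) → _) :=
  fun _ _ _ _ h => ⟨funext fun a => congrFun h (.inl a), funext fun b => congrFun h (.inr b)⟩

theorem glue_inl_inr (z : ∀ i, Sum.elim F K i) :
    glue (fun a => z (.inl a)) (fun b => z (.inr b)) = z := by
  funext i
  cases i <;> rfl

theorem sumProd_eq_image2_glue (W : Set (∀ a, F a)) (Y : Set (∀ b, K b)) :
    sumProd W Y = Set.image2 glue W Y := by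
  ext z
  constructor
  · exact fun ⟨hW, hY⟩ => ⟨_, hW, _, hY, glue_inl_inr z⟩
  · rintro ⟨x, hx, y, hy, rfl⟩
    exact ⟨hx, hy⟩

theorem sumProd_sUnion (W : Set (∀ a, F a)) (P : Set (Set (∀ b, K b))) :
    sumProd W (⋃₀ P) = ⋃ S ∈ P, sumProd W S := by
  simp only [sumProd_eq_image2_glue, Set.image2_sUnion_right]

theorem disjoint_sumProd_right (W : Set (∀ a, F a)) {Y Y' : Set (∀ b, K b)}
    (h : Disjoint Y Y') : Disjoint (sumProd W Y) (sumProd W Y') :=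
  Set.disjoint_left.2 fun _ hz hz' => Set.disjoint_left.1 h hz.2 hz'.2

variable [DecidableEq α] [DecidableEq β] [∀ a, AddCommGroup (F a)] [∀ b, AddCommGroup (K b)]

theorem glue_coordLine_left (x : ∀ a, F a) (y : ∀ b, K b) (a : α) (t : F a) :
    glue (coordLine x a t) y = coordLine (glue x y) (.inl a) t :=
  Sum.rec_update_left (γ := Sum.elim F K) x y a (x a + t)

theorem glue_coordLine_right (x : ∀ a, F a) (y : ∀ b, K b) (b : β) (t : K b) :
    glue x (coordLine y b t) = coordLine (glue x y) (.inr b) t :=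
  Sum.rec_update_right (γ := Sum.elim F K) x y b (y b + t)

variable {T : ∀ a, Set (F a)} {V : ∀ b, Set (K b)}

theorem IsCopyD.image_glue_left {S : Set (∀ a, F a)} (h : IsCopyD T S) (V : ∀ b, Set (K b))
    (y : ∀ b, K b) : IsCopyD (sumTiles T V) ((glue · y) '' S) := by
  obtain ⟨a, x, rfl⟩ := isCopyD_iff_exists_image_coordLine.1 h
  simp only [Set.image_image, glue_coordLine_left]
  exact isCopyD_image_coordLine (sumTiles T V) (glue x y) (.inl a)

theorem IsCopyD.image_glue_right {S : Set (∀ b, K b)} (h : IsCopyD V S) (T : ∀ a, Set (F a))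
    (x : ∀ a, F a) : IsCopyD (sumTiles T V) (glue x '' S) := by
  obtain ⟨b, y, rfl⟩ := isCopyD_iff_exists_image_coordLine.1 h
  simp only [Set.image_image, glue_coordLine_right]
  exact isCopyD_image_coordLine (sumTiles T V) (glue x y) (.inr b)

theorem IsCopyD.exists_image_glue {S : Set (∀ i, Sum.elim F K i)}
    (h : IsCopyD (sumTiles T V) S) :
    (∃ y S', IsCopyD T S' ∧ S = (glue · y) '' S') ∨ ∃ x S', IsCopyD V S' ∧ S = glue x '' S' := by
  obtain ⟨i, z, rfl⟩ := isCopyD_iff_exists_image_coordLine.1 h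
  obtain ⟨x, y, rfl⟩ : ∃ x y, glue x y = z := ⟨_, _, glue_inl_inr z⟩
  rcases i with a | b
  · refine .inl ⟨y, _, isCopyD_image_coordLine T x a, ?_⟩
    simp only [Set.image_image, glue_coordLine_left]
    rfl
  · refine .inr ⟨x, _, isCopyD_image_coordLine V y b, ?_⟩
    simp only [Set.image_image, glue_coordLine_right]
    rfl

theorem TilableD.sumProd_right {Y : Set (∀ b, K b)} (h : TilableD V Y) (T : ∀ a, Set (F a))
    (W : Set (∀ a, F a)) : TilableD (sumTiles T V) (sumProd W Y) := by
  rw [sumProd_eq_image2_glue, ← Set.iUnion_image_left]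
  have hdisj : W.PairwiseDisjoint fun x => glue x '' Y :=
    (Set.pairwiseDisjoint_image_right_iff fun x _ => glue_injective2.right x).2
      glue_injective2.uncurry.injOn
  exact .biUnion hdisj fun x _ =>
    h.image (glue_injective2.right x) fun S hS => hS.image_glue_right T x

theorem TilableD.sumProd_image_right {γ : Type*} {L : γ → Type u} [DecidableEq γ]
    [∀ c, AddCommGroup (L c)] {V' : ∀ c, Set (L c)} {W : Set (∀ a, F a)} {Y : Set (∀ b, K b)}
    (h : TilableD (sumTiles T V) (sumProd W Y)) {g : (∀ b, K b) → ∀ c, L c}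
    (hg : Function.Injective g) (hcopy : ∀ S, IsCopyD V S → IsCopyD V' (g '' S)) :
    TilableD (sumTiles T V') (sumProd W (g '' Y)) := by
  let f (z : ∀ i, Sum.elim F K i) : ∀ i, Sum.elim F L i :=
    glue (fun a => z (.inl a)) (g fun b => z (.inr b))
  have hfglue (x y) : f (glue x y) = glue x (g y) := rfl
  have hf : Function.Injective f := by
    intro z z' hzz'
    obtain ⟨hl, hr⟩ := glue_injective2 hzz'
    rw [← glue_inl_inr z, ← glue_inl_inr z', hl, hg hr]
  rw [sumProd_eq_image2_glue, ← Set.image_image2_distrib_right hfglue, ← sumProd_eq_image2_glue]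
  refine h.image hf fun S hS => ?_
  rcases hS.exists_image_glue with ⟨y, S', hS', rfl⟩ | ⟨x, S', hS', rfl⟩
  · simpa only [Set.image_image, hfglue] using hS'.image_glue_left V' (g y)
  · simpa only [Set.image_image, hfglue] using (hcopy S' hS').image_glue_right T x

end SumFamilies

section Transitivity

variable {α β : Type*} [DecidableEq α] [DecidableEq β] {F : α → Type u} {K : β → Type u}
  [∀ a, AddCommGroup (F a)] [∀ b, AddCommGroup (K b)]

theorem TilableD.sumProd_trans {T : ∀ a, Set (F a)} {V V' : ∀ b, Set (K b)} {W : Set (∀ a, F a)}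
    {Y : Set (∀ b, K b)} (hY : TilableD V Y)
    (hW : ∀ j, TilableD (sumTiles T fun _ => V' j) (sumProd W (unitBox (V j)))) :
    TilableD (sumTiles T V') (sumProd W Y) := by
  obtain ⟨P, hcopy, hdisj, rfl⟩ := hY
  rw [sumProd_sUnion]
  refine .biUnion (fun S hS S' hS' hne => disjoint_sumProd_right W (hdisj hS hS' hne)) ?_
  intro S hS
  obtain ⟨j, y, rfl⟩ := isCopyD_iff_exists_image_coordLine.1 (hcopy S hS)
  rw [← image_coordLine_unitBox]
  have hinj : Function.Injective fun v : Unit → K j => coordLine y j (v ()) :=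
    (coordLine_injective y j).comp fun _ _ h => funext fun _ => h
  exact (hW j).sumProd_image_right hinj fun S hS => hS.image_coordLine_unit y

theorem tilableTransitive_general {δ : Type*} [DecidableEq δ] {G : Type u} [AddCommGroup G]
    {A B : Set G} {T : ∀ a, Set (F a)} {W : Set (∀ a, F a)} {U : ∀ b, Set (K b)}
    {Y : Set (∀ i, Sum.elim K (fun _ : δ => G) i)}
    (h1 : TilableD (sumTiles T fun _ : Unit => A) (sumProd W (unitBox B)))
    (h2 : TilableD (sumTiles U fun _ : δ => B) Y) :
    TilableD (sumTiles T (sumTiles U fun _ : δ => A)) (sumProd W Y) := by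
  refine h2.sumProd_trans fun j => ?_
  rcases j with b | _
  · exact (isCopyD_unitBox (U b)).tilableD.sumProd_right T W
  · exact h1

end Transitivity

/-- transitivity of tilings. If `B₁ × ⋯ × B_m × B` is
`(T₁,…,T_m,A)`-tilable and `C₁ × ⋯ × C_n × C^d` is `(U₁,…,U_n,B,…,B)`-tilable,
then `B₁ × ⋯ × B_m × C₁ × ⋯ × C_n × C^d` is
`(T₁,…,T_m,U₁,…,U_n,A,…,A)`-tilable. -/
theorem tilableTransitive {G : Type u} [AddCommGroup G]
    {m n d : ℕ} (Gm : Fin m → Type u) [∀ i, AddCommGroup (Gm i)]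
    (Hn : Fin n → Type u) [∀ i, AddCommGroup (Hn i)]
    (A B C : Set G) (hAB : A ⊆ B) (hBC : B ⊆ C)
    (Tm : ∀ i, Set (Gm i)) (Bm : ∀ i, Set (Gm i)) (hTB : ∀ i, Tm i ⊆ Bm i)
    (Un : ∀ i, Set (Hn i)) (Cn : ∀ i, Set (Hn i)) (hUC : ∀ i, Un i ⊆ Cn i)
    (h1 : TilableD (G := Sum.elim Gm fun _ : Unit => G)
            (fun i => match i with
              | .inl a => Tm a
              | .inr _ => A)
            {z | (∀ a : Fin m, z (.inl a) ∈ Bm a) ∧ z (.inr ()) ∈ B})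
    (h2 : TilableD (G := Sum.elim Hn fun _ : Fin d => G)
            (fun i => match i with
              | .inl a => Un a
              | .inr _ => B)
            {z | (∀ a : Fin n, z (.inl a) ∈ Cn a) ∧ ∀ j : Fin d, z (.inr j) ∈ C}) :
    TilableD (G := Sum.elim Gm (Sum.elim Hn fun _ : Fin d => G))
      (fun i => match i with
        | .inl a => Tm a
        | .inr (.inl a) => Un a
        | .inr (.inr _) => A)
      {z | (∀ a : Fin m, z (.inl a) ∈ Bm a) ∧
           (∀ a : Fin n, z (.inr (.inl a)) ∈ Cn a) ∧
           (∀ j : Fin d, z (.inr (.inr j)) ∈ C)} := by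
  have hTA := h1.congr_tiles (T' := sumTiles Tm fun _ => A) (by rintro (_ | _) <;> rfl)
  have hUB := h2.congr_tiles (T' := sumTiles Un fun _ => B) (by rintro (_ | _) <;> rfl)
  exact (tilableTransitive_general (W := {x | ∀ a, x a ∈ Bm a}) hTA hUB).congr_tiles
    (by rintro (_ | _ | _) <;> rfl)
end

section
/- Let T be a finite non-empty subset of ℤ^n. Then there exists d ≥ 1 such that ℤ^d can be partitioned into isometric copies of T (in fact, copies obtained by translating T and placing it along coordinate subspaces of ℤ^d via permutations of coordinates). -/
/-- Embed `ℤ^n` into `ℤ^d` (pad with zeros in the last `d - n` coordinates). -/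
def embed {n d : ℕ} (t : Fin n → ℤ) : Fin d → ℤ :=
  fun j => if h : (j : ℕ) < n then t ⟨j, h⟩ else 0

/-- A copy of the tile `T ⊆ ℤ^n` in `ℤ^d`: the image of `T × {0}^{d-n}` under
an isometry of `ℤ^d` (a signed permutation of coordinates followed by a
translation). -/
def IsIsoCopy {n d : ℕ} (T : Set (Fin n → ℤ)) (S : Set (Fin d → ℤ)) : Prop :=
  ∃ (σ : Equiv.Perm (Fin d)) (ε : Fin d → ℤ) (y : Fin d → ℤ),
    (∀ j, ε j = 1 ∨ ε j = -1) ∧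
    S = (fun t : Fin n → ℤ => fun j => ε j * embed t (σ j) + y j) '' T

/-!
The proof follows the idea of Gruslys, Leader and Tan. A linear functional that is injective on `T`,
reduced modulo a large `N`, turns `T` into a subset of `ZMod N`. Labelling the points of `ℤ^d`
through this functional on each of finitely many blocks of `n` coordinates, a partition of
`(ZMod N)^ℕ` into axis-parallel lines carrying translates of that subset, in finitely many
directions, pulls back to a partition of `ℤ^d` into copies of `T`.

The translates of the tile cover every point of `ZMod N` exactly `t = |T|` times, and for suitable
multiplicities `1` time modulo `t`. Laying the tiles of such a cover in a fresh direction, each over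
one of many disjoint parts `V₁, V₂, …` of `(ZMod N)^ℕ`, leaves in each fiber of that direction `t`,
or `1` modulo `t`, fewer parts to be tiled. So once a fixed core is tileable together with any
choice of a certain number of parts, it is so together with any sufficiently large number of them.

Applied to the points of a box, sorted by the set of coordinates in which they differ from a given
point `y`, this yields a set that is tileable both with and without the point `y`. With the help of
these holes, the cylinder over a union of tiles in one coordinate is tiled, even after the removal
of a few cells; the union is enlarged by one tile at a time until it is everything.
-/

namespace LineTiling

open Function Set
open scoped Pointwise

section Basic

variable {ι κ S : Type*} [DecidableEq ι] {F : Set (Finset S)} {J J' : Set ι} {A : Set ι}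
  {U V C : Set (ι → S)}

/-- The labelling `c` describes a partition of `U` into lines `{update x j a | a ∈ D}` with
`j ∈ J` and `D ∈ F`: it assigns to each point of `U` the pair `(j, D)` of its line. -/
structure IsLabelling (F : Set (Finset S)) (J : Set ι) (U : Set (ι → S))
    (c : (ι → S) → ι × Finset S) : Prop where
  dir_mem : ∀ x ∈ U, (c x).1 ∈ J
  tile_mem : ∀ x ∈ U, (c x).2 ∈ F
  apply_mem : ∀ x ∈ U, x (c x).1 ∈ (c x).2
  update_mem : ∀ x ∈ U, ∀ a ∈ (c x).2, update x (c x).1 a ∈ U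
  label_update : ∀ x ∈ U, ∀ a ∈ (c x).2, c (update x (c x).1 a) = c x

/-- `U` can be partitioned into copies of the tiles in `F`, each placed on a line in a direction
from `J`. -/
def TileableAlong (F : Set (Finset S)) (J : Set ι) (U : Set (ι → S)) : Prop :=
  ∃ c, IsLabelling F J U c

/-- `U` can be partitioned into copies of the tiles in `F`, placed on lines in finitely many
directions. -/
def Tileable (F : Set (Finset S)) (U : Set (ι → S)) : Prop :=
  ∃ J : Finset ι, TileableAlong F J U

theorem TileableAlong.mono (hU : TileableAlong F J U) (hJ : J ⊆ J') : TileableAlong F J' U := by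
  obtain ⟨c, hc⟩ := hU
  exact ⟨c, { hc with dir_mem := fun x hx ↦ hJ (hc.dir_mem x hx) }⟩

theorem TileableAlong.iUnion [Nonempty ι] {W : κ → Set (ι → S)}
    (hW : ∀ k, TileableAlong F J (W k)) (hd : Pairwise (Disjoint on W)) :
    TileableAlong F J (⋃ k, W k) := by
  choose c hc using hW
  have exists_label (x : ι → S) : ∃ l, ∀ k, x ∈ W k → l = c k x := by
    by_cases h : ∃ k, x ∈ W k
    · obtain ⟨k, hk⟩ := h
      refine ⟨c k x, fun l hl ↦ ?_⟩
      rw [hd.eq (not_disjoint_iff.2 ⟨x, hk, hl⟩)]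
    · exact ⟨(Classical.arbitrary ι, ∅), fun k hk ↦ absurd ⟨k, hk⟩ h⟩
  choose label label_eq using exists_label
  refine ⟨label, ?_, ?_, ?_, ?_, ?_⟩ <;> intro x hx <;> obtain ⟨k, hk⟩ := mem_iUnion.1 hx <;>
    rw [label_eq x k hk]
  · exact (hc k).dir_mem x hk
  · exact (hc k).tile_mem x hk
  · exact (hc k).apply_mem x hk
  · exact fun a ha ↦ mem_iUnion.2 ⟨k, (hc k).update_mem x hk a ha⟩
  · intro a ha
    rw [label_eq _ k ((hc k).update_mem x hk a ha), (hc k).label_update x hk a ha]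

theorem TileableAlong.inter_of_dependsOn (hU : TileableAlong F J U)
    (hC : DependsOn (· ∈ C) A) (hAJ : Disjoint A J) : TileableAlong F J (U ∩ C) := by
  obtain ⟨c, hc⟩ := hU
  refine ⟨c, fun x hx ↦ hc.dir_mem x hx.1, fun x hx ↦ hc.tile_mem x hx.1,
    fun x hx ↦ hc.apply_mem x hx.1, fun x hx a ha ↦ ⟨hc.update_mem x hx.1 a ha, ?_⟩,
    fun x hx ↦ hc.label_update x hx.1⟩
  refine (hC fun i hi ↦ ?_).mpr hx.2
  exact update_of_ne (hAJ.ne_of_mem hi (hc.dir_mem x hx.1)) _ _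

theorem TileableAlong.comp [DecidableEq κ] (hU : TileableAlong F J U) {f : ι → κ}
    (hf : Injective f) : TileableAlong F (f '' J) {x | x ∘ f ∈ U} := by
  obtain ⟨c, hc⟩ := hU
  have update_comp (x : κ → S) (i a) : update x (f i) a ∘ f = update (x ∘ f) i a :=
    update_comp_eq_of_injective x hf i a
  refine ⟨fun x ↦ (f (c (x ∘ f)).1, (c (x ∘ f)).2), fun x hx ↦ mem_image_of_mem f (hc.dir_mem _ hx),
    fun x hx ↦ hc.tile_mem _ hx, fun x hx ↦ hc.apply_mem _ hx, fun x hx a ha ↦ ?_,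
    fun x hx a ha ↦ ?_⟩
  · simpa only [mem_ofPred_eq, update_comp] using hc.update_mem _ hx a ha
  · simp only [update_comp, hc.label_update _ hx a ha]

theorem tileableAlong_line {D : Finset S} (hD : D ∈ F) {j : ι} (hj : j ∉ A)
    (hV : DependsOn (· ∈ V) A) : TileableAlong F {j} (V ∩ {x | x j ∈ D}) := by
  refine ⟨fun _ ↦ (j, D), fun _ _ ↦ rfl, fun _ _ ↦ hD, fun x hx ↦ hx.2,
    fun x hx a ha ↦ ⟨?_, by simpa using ha⟩, fun _ _ _ _ ↦ rfl⟩
  exact (hV fun i hi ↦ update_of_ne (ne_of_mem_of_not_mem hi hj) _ _).mpr hx.1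

theorem Tileable.iUnion [Nonempty ι] [Finite κ] {W : κ → Set (ι → S)}
    (hW : ∀ k, Tileable F (W k)) (hd : Pairwise (Disjoint on W)) : Tileable F (⋃ k, W k) := by
  cases nonempty_fintype κ
  choose J hJ using hW
  refine ⟨Finset.univ.biUnion J, .iUnion (fun k ↦ (hJ k).mono ?_) hd⟩
  exact_mod_cast Finset.subset_biUnion_of_mem J (Finset.mem_univ k)

theorem Tileable.union [Nonempty ι] (hU : Tileable F U) (hV : Tileable F V) (hd : Disjoint U V) :
    Tileable F (U ∪ V) := by
  rw [union_eq_iUnion]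
  exact .iUnion (Bool.forall_bool.2 ⟨hV, hU⟩) (pairwise_disjoint_on_bool.2 hd)

theorem tileable_empty [Nonempty ι] : Tileable F (∅ : Set (ι → S)) := by
  simpa using Tileable.iUnion (F := F) (W := (Empty.elim : Empty → Set (ι → S)))
    (fun k ↦ k.elim) (fun k ↦ k.elim)

theorem Tileable.comp [DecidableEq κ] (hU : Tileable F U) {f : ι → κ} (hf : Injective f) :
    Tileable F {x | x ∘ f ∈ U} := by
  obtain ⟨J, hJ⟩ := hU
  exact ⟨J.image f, by simpa using hJ.comp hf⟩

theorem tileable_line {D : Finset S} (hD : D ∈ F) {j : ι} (hj : j ∉ A)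
    (hV : DependsOn (· ∈ V) A) : Tileable F (V ∩ {x | x j ∈ D}) :=
  ⟨{j}, by simpa using tileableAlong_line hD hj hV⟩

end Basic

section DependsOn

variable {ι S : Type*} {A : Set ι}

theorem dependsOn_apply (p : S → Prop) (i : ι) : DependsOn (· ∈ {x : ι → S | p (x i)}) {i} :=
  fun x y hxy ↦ by simp [hxy i rfl]

theorem dependsOn_eqOn (y : ι → S) (I : Set ι) : DependsOn (· ∈ {x | EqOn x y I}) I :=
  fun _ _ hx ↦ propext
    ⟨fun h i hi ↦ (hx i hi).symm.trans (h hi), fun h i hi ↦ (hx i hi).trans (h hi)⟩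

end DependsOn

section NatCoordinates

variable {S : Type*} {F : Set (Finset S)} {I A : Finset ℕ} {U C : Set (ℕ → S)}

theorem Tileable.inter (hU : Tileable F U) (hI : DependsOn (· ∈ U) I) (hC : DependsOn (· ∈ C) A)
    (hd : Disjoint I A) : Tileable F (U ∩ C) := by
  obtain ⟨J, hJ⟩ := hU
  obtain ⟨M, hM⟩ := (I ∪ A).exists_nat_subset_range
  have I_lt : ∀ i ∈ I, i < M := fun i hi ↦ Finset.mem_range.1 (hM (Finset.mem_union_left A hi))
  have A_lt : ∀ i ∈ A, i < M := fun i hi ↦ Finset.mem_range.1 (hM (Finset.mem_union_right I hi))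
  let f (i : ℕ) : ℕ := if i ∈ I then i else i + M
  have hf : Injective f := by
    intro i j hij
    grind
  have comp_mem (x : ℕ → S) : x ∘ f ∈ U ↔ x ∈ U :=
    (hI fun i hi ↦ by simp [f, Finset.mem_coe.1 hi]).to_iff
  have hA : Disjoint (A : Set ℕ) (f '' J) := by
    refine disjoint_right.2 ?_
    rintro _ ⟨i, -, rfl⟩ hi
    grind [Finset.disjoint_left]
  refine ⟨J.image f, ?_⟩
  simpa [comp_mem] using (hJ.comp hf).inter_of_dependsOn hC hA

theorem tileable_of_fibers [Finite S] (hU : DependsOn (· ∈ U) A) (i : ℕ)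
    (h : ∀ s, Tileable F {x | update x i s ∈ U}) : Tileable F U := by
  have fiber_dependsOn (s : S) : DependsOn (· ∈ {x | update x i s ∈ U}) (A.erase i) := by
    intro x y hxy
    refine hU fun k hk ↦ ?_
    by_cases hki : k = i
    · simp [hki]
    · simpa [hki] using hxy k (by simp_all)
  have hU_eq : U = ⋃ s, {x | update x i s ∈ U} ∩ {x | x i = s} := by
    ext x
    simp
  rw [hU_eq]
  refine .iUnion (fun s ↦ ?_) fun s s' hs ↦ ?_
  · exact (h s).inter (fiber_dependsOn s) (A := {i})
      (by simpa using dependsOn_apply (· = s) i) (by simp)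
  · refine disjoint_left.2 fun x hx hx' ↦ hs (hx.2.symm.trans hx'.2)

end NatCoordinates

section Covers

variable {κ S : Type*} {F : Set (Finset S)} {A : Finset ℕ} {K U : Set (ℕ → S)}
  {V : κ → Set (ℕ → S)}

/-- The tiles `B b` are laid in a fresh direction across the parts `V b`; above the value `s` of
the fresh coordinate this covers exactly the parts with `s ∈ B b`. -/
theorem tileable_of_forall_sdiff [Finite S] {β : Type*} [Finite β] {B : β → Finset S}
    (hB : ∀ b, B b ∈ F) (hU : DependsOn (· ∈ U) A) {W : β → Set (ℕ → S)}
    (hW : ∀ b, DependsOn (· ∈ W b) A) (hWU : ∀ b, W b ⊆ U) (hd : Pairwise (Disjoint on W))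
    (h : ∀ s, Tileable F (U \ ⋃ b, ⋃ (_ : s ∈ B b), W b)) : Tileable F U := by
  obtain ⟨j, hj⟩ := Infinite.exists_notMem_finset A
  let M : Set (ℕ → S) := ⋃ b, W b ∩ {x | x j ∈ B b}
  have hM : Tileable F M :=
    .iUnion (fun b ↦ tileable_line (hB b) hj (hW b))
      fun b b' hb ↦ (hd hb).mono inter_subset_left inter_subset_left
  have hMU : M ⊆ U := iUnion_subset fun b ↦ inter_subset_left.trans (hWU b)
  have update_agrees (x : ℕ → S) (s : S) : ∀ i ∈ (A : Set ℕ), update x j s i = x i :=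
    fun i hi ↦ update_of_ne (ne_of_mem_of_not_mem hi hj) _ _
  have rest_dependsOn : DependsOn (· ∈ U \ M) (insert j A : Finset ℕ) := by
    intro x y hxy
    have hA : ∀ i ∈ (A : Set ℕ), x i = y i := fun i hi ↦ hxy i (by simp_all)
    simp [M, hU hA, hW _ hA, hxy j (by simp)]
  have rest_tileable : Tileable F (U \ M) := by
    refine tileable_of_fibers rest_dependsOn j fun s ↦ ?_
    convert h s using 1
    ext x
    simp [M, hU (update_agrees x s), hW _ (update_agrees x s), and_comm]
  simpa [union_sdiff_cancel hMU] using hM.union rest_tileable disjoint_sdiff_right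

/-- A core `K` and pairwise disjoint parts `V p` outside it, all determined by the coordinates
in `A`. -/
structure IsPartSystem (A : Finset ℕ) (K : Set (ℕ → S)) (V : κ → Set (ℕ → S)) : Prop where
  dependsOn_core : DependsOn (· ∈ K) A
  dependsOn_part : ∀ p, DependsOn (· ∈ V p) A
  pairwise_disjoint : Pairwise (Disjoint on V)
  disjoint_core : ∀ p, Disjoint K (V p)

/-- The core `K` together with the parts `V p`, `p ∈ E`. -/
def withParts (K : Set (ℕ → S)) (V : κ → Set (ℕ → S)) (E : Finset κ) : Set (ℕ → S) :=
  K ∪ ⋃ p ∈ E, V p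

theorem mem_withParts {E : Finset κ} {x : ℕ → S} :
    x ∈ withParts K V E ↔ x ∈ K ∨ ∃ p ∈ E, x ∈ V p := by
  simp [withParts]

theorem IsPartSystem.dependsOn_withParts (h : IsPartSystem A K V) (E : Finset κ) :
    DependsOn (· ∈ withParts K V E) A := fun x y hxy ↦ by
  simp [mem_withParts, h.dependsOn_core hxy, h.dependsOn_part _ hxy]

theorem IsPartSystem.eq_of_mem (h : IsPartSystem A K V) {p q : κ} {x : ℕ → S} (hp : x ∈ V p)
    (hq : x ∈ V q) : p = q :=
  h.pairwise_disjoint.eq (not_disjoint_iff.2 ⟨x, hp, hq⟩)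

theorem IsPartSystem.withParts_sdiff [DecidableEq κ] (h : IsPartSystem A K V) (E R : Finset κ) :
    withParts K V (E \ R) = withParts K V E \ ⋃ p ∈ R, V p := by
  ext x
  simp only [mem_withParts, mem_sdiff, Finset.mem_sdiff, mem_iUnion, not_exists]
  constructor
  · rintro (hx | ⟨p, ⟨hp, hpR⟩, hx⟩)
    · exact ⟨.inl hx, fun q _ hq ↦ disjoint_left.1 (h.disjoint_core q) hx hq⟩
    · exact ⟨.inr ⟨p, hp, hx⟩, fun q hq hxq ↦ hpR (h.eq_of_mem hx hxq ▸ hq)⟩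
  · rintro ⟨hx | ⟨p, hp, hx⟩, hR⟩
    · exact .inl hx
    · exact .inr ⟨p, ⟨hp, fun hpR ↦ hR p hpR hx⟩, hx⟩

variable [DecidableEq S]

theorem IsPartSystem.tileable_of_cover [Finite S] (h : IsPartSystem A K V)
    {m : Multiset (Finset S)} (hm : ∀ D ∈ m, D ∈ F) {E : Finset κ} (hE : m.card ≤ E.card)
    (hT : ∀ a (E' : Finset κ), E'.card + m.countP (a ∈ ·) = E.card →
      Tileable F (withParts K V E')) :
    Tileable F (withParts K V E) := by
  classical
  obtain ⟨ρ⟩ : Nonempty (m ↪ E) := Embedding.nonempty_of_card_le (by simpa using hE)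
  have hρ : Injective fun b ↦ (ρ b : κ) := Subtype.val_injective.comp ρ.injective
  refine tileable_of_forall_sdiff (B := fun b : m ↦ b.1) (fun b ↦ hm b (Multiset.coe_mem))
    (h.dependsOn_withParts E) (W := fun b ↦ V (ρ b)) (fun b ↦ h.dependsOn_part _)
    (fun b x hx ↦ mem_withParts.2 (.inr ⟨_, (ρ b).2, hx⟩))
    (fun b b' hb ↦ h.pairwise_disjoint (hρ.ne hb)) fun a ↦ ?_
  let R : Finset κ := (Finset.univ.filter fun b : m ↦ a ∈ b.1).image fun b ↦ (ρ b : κ)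
  have hRE : R ⊆ E := by
    intro p hp
    obtain ⟨b, -, rfl⟩ := Finset.mem_image.1 hp
    exact (ρ b).2
  have hR : R.card = m.countP (a ∈ ·) := by
    conv_rhs => rw [← m.map_univ_coe, Multiset.countP_map]
    exact Finset.card_image_of_injective _ hρ
  have union_R : ⋃ b : m, ⋃ (_ : a ∈ b.1), V (ρ b) = ⋃ p ∈ R, V p := by
    ext x
    simp only [R, mem_iUnion, Finset.mem_image, Finset.mem_filter, Finset.mem_univ, true_and,
      exists_prop]
    exact ⟨fun ⟨b, hb, hx⟩ ↦ ⟨ρ b, ⟨b, hb, rfl⟩, hx⟩, fun ⟨_, ⟨b, hb, rfl⟩, hx⟩ ↦ ⟨b, hb, hx⟩⟩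
  rw [union_R, ← h.withParts_sdiff]
  exact hT a (E \ R) (by rw [← hR, Finset.card_sdiff_add_card_eq_card hRE])

/-- Two multisets of tiles in `F`: `uniform` covers every point exactly `t` times, `residual` a
number of times congruent to `1` modulo `t`. -/
structure ModularCovers (F : Set (Finset S)) where
  t : ℕ
  t_pos : 0 < t
  uniform : Multiset (Finset S)
  residual : Multiset (Finset S)
  uniform_subset : ∀ D ∈ uniform, D ∈ F
  residual_subset : ∀ D ∈ residual, D ∈ F
  countP_uniform : ∀ s, uniform.countP (s ∈ ·) = t
  countP_residual : ∀ s, residual.countP (s ∈ ·) ≡ 1 [MOD t]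

namespace ModularCovers

/-- The least number of parts across which `uniform` can be laid. -/
def base (c : ModularCovers F) : ℕ := c.uniform.card

/-- Starting from this many parts, one can lay `residual` up to `t` times, to adjust their number
modulo `t`, and still keep `base` parts. -/
def threshold (c : ModularCovers F) : ℕ := c.base + c.t * c.residual.card

theorem base_le_threshold (c : ModularCovers F) : c.base ≤ c.threshold := Nat.le_add_right _ _

end ModularCovers

/-- The uniform cover raises the number of parts by `t`. -/
theorem IsPartSystem.tileable_of_modEq_base [Finite S] (h : IsPartSystem A K V)
    (c : ModularCovers F)
    (hbase : ∀ E : Finset κ, E.card = c.base → Tileable F (withParts K V E)) (E : Finset κ)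
    (hle : c.base ≤ E.card) (hmod : c.base ≡ E.card [MOD c.t]) : Tileable F (withParts K V E) := by
  induction hn : E.card using Nat.strong_induction_on generalizing E with
  | _ n ih =>
    subst hn
    rcases hle.eq_or_lt with heq | hlt
    · exact hbase E heq.symm
    refine h.tileable_of_cover c.uniform_subset hle fun a E' hE' ↦ ?_
    rw [c.countP_uniform] at hE'
    have := c.t_pos
    refine ih _ (by omega) E' ?_ ?_ rfl
    · have := hmod.add_le_of_lt hlt
      omega
    · rw [← hE'] at hmod
      exact hmod.trans Nat.add_modEq_right

/-- The residual cover raises the residue modulo `t` by one. -/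
theorem IsPartSystem.tileable_of_modEq [Finite S] (h : IsPartSystem A K V) (c : ModularCovers F)
    (hbase : ∀ E : Finset κ, E.card = c.base → Tileable F (withParts K V E)) (i : ℕ)
    (E : Finset κ) (hle : c.base + i * c.residual.card ≤ E.card)
    (hmod : c.base + i ≡ E.card [MOD c.t]) : Tileable F (withParts K V E) := by
  induction i generalizing E with
  | zero => exact h.tileable_of_modEq_base c hbase E (by simpa using hle) hmod
  | succ i ih =>
    rw [add_mul, one_mul] at hle
    refine h.tileable_of_cover c.residual_subset (by omega) fun a E' hE' ↦ ih E' ?_ ?_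
    · have := c.residual.countP_le_card (a ∈ ·)
      omega
    · refine Nat.ModEq.add_right_cancel (c.countP_residual a).symm ?_
      rwa [hE']

theorem IsPartSystem.tileable_of_threshold_le [Finite S] (h : IsPartSystem A K V)
    (c : ModularCovers F)
    (hbase : ∀ E : Finset κ, E.card = c.base → Tileable F (withParts K V E))
    (E : Finset κ) (hE : c.threshold ≤ E.card) : Tileable F (withParts K V E) := by
  let i := (E.card - c.base) % c.t
  have hi : i < c.t := Nat.mod_lt _ c.t_pos
  have hle : c.base ≤ E.card := c.base_le_threshold.trans hE
  refine h.tileable_of_modEq c hbase i E ?_ ?_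
  · exact le_trans (by unfold ModularCovers.threshold; gcongr) hE
  · have : E.card - c.base ≡ i [MOD c.t] := (Nat.mod_modEq _ _).symm
    simpa [hle] using (this.add_left c.base).symm

end Covers

theorem ModularCovers.exists_tile_mem {S : Type*} [DecidableEq S] {F : Set (Finset S)}
    (c : ModularCovers F) (s : S) : ∃ D ∈ F, s ∈ D := by
  have : 0 < c.uniform.countP (s ∈ ·) := c.countP_uniform s ▸ c.t_pos
  obtain ⟨D, hD, hs⟩ := Multiset.countP_pos.1 this
  exact ⟨D, c.uniform_subset D hD, hs⟩

section Exchange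

variable {κ μ S : Type*} {F : Set (Finset S)} {I : Finset ℕ} {X : κ → Set (ℕ → S)}
  {W : μ → Set (ℕ → S)}

theorem isPartSystem_biUnion (hX : ∀ a, DependsOn (· ∈ X a) I) (hW : ∀ i, DependsOn (· ∈ W i) I)
    (hXX : Pairwise (Disjoint on X)) (hXW : ∀ a i, Disjoint (X a) (W i)) (B : Finset μ) :
    IsPartSystem I (⋃ i ∈ B, W i) X where
  dependsOn_core := fun x y hxy ↦ by simp [hW _ hxy]
  dependsOn_part := hX
  pairwise_disjoint := hXX
  disjoint_core := fun a ↦ disjoint_iUnion₂_left.2 fun i _ ↦ (hXW a i).symm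

theorem tileable_biUnion_union_biUnion_of_card_eq (hXX : Pairwise (Disjoint on X))
    (hWW : Pairwise (Disjoint on W)) (hXW : ∀ a i, Disjoint (X a) (W i))
    (h : ∀ a i, Tileable F (X a ∪ W i)) {E : Finset κ} {B : Finset μ} (hEB : E.card = B.card) :
    Tileable F ((⋃ i ∈ B, W i) ∪ ⋃ a ∈ E, X a) := by
  let f : E ≃ B := Finset.equivOfCardEq hEB
  have pairing : (⋃ i ∈ B, W i) ∪ ⋃ a ∈ E, X a = ⋃ a : E, X a ∪ W (f a) := by
    rw [iUnion_union_distrib, f.surjective.iUnion_comp fun i : B ↦ W i, union_comm]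
    exact congrArg₂ _ (biUnion_eq_iUnion _ _) (biUnion_eq_iUnion _ _)
  rw [pairing]
  refine .iUnion (fun a ↦ h _ _) fun a b hab ↦ ?_
  have hab' : (a : κ) ≠ b := Subtype.coe_ne_coe.2 hab
  have hf : (f a : μ) ≠ f b := Subtype.coe_ne_coe.2 (f.injective.ne hab)
  exact .union_left (.union_right (hXX hab') (hXW _ _)) (.union_right (hXW _ _).symm (hWW hf))

/-- First the number of parts `X a` and then the number of parts `W i` is raised from `c.base`. -/
theorem tileable_biUnion_union_biUnion [DecidableEq S] [Finite S]
    (hX : ∀ a, DependsOn (· ∈ X a) I) (hW : ∀ i, DependsOn (· ∈ W i) I)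
    (hXX : Pairwise (Disjoint on X)) (hWW : Pairwise (Disjoint on W))
    (hXW : ∀ a i, Disjoint (X a) (W i)) (h : ∀ a i, Tileable F (X a ∪ W i)) (c : ModularCovers F)
    {E : Finset κ} {B : Finset μ} (hE : c.threshold ≤ E.card) (hB : c.threshold ≤ B.card) :
    Tileable F (withParts (⋃ i ∈ B, W i) X E) := by
  have raise_X (B₀ : Finset μ) (hB₀ : B₀.card = c.base) :
      Tileable F (withParts (⋃ i ∈ B₀, W i) X E) :=
    (isPartSystem_biUnion hX hW hXX hXW B₀).tileable_of_threshold_le c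
      (fun E₀ hE₀ ↦ tileable_biUnion_union_biUnion_of_card_eq hXX hWW hXW h (hE₀.trans hB₀.symm))
      E hE
  rw [withParts, union_comm]
  refine (isPartSystem_biUnion hW hX hWW (fun i a ↦ (hXW a i).symm) E).tileable_of_threshold_le c
    (fun B₀ hB₀ ↦ ?_) B hB
  rw [withParts, union_comm]
  exact raise_X B₀ hB₀

end Exchange

section Patterns

variable {ν S : Type*} {F : Set (Finset S)} {D : ν → Finset S} {y : ν → S}
  {𝒯 𝒯' : Set (Set ν)}

/-- The points of the box `∏ j, D j` which differ from `y` in a set of coordinates belonging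
to `𝒯`. -/
def patternCell (D : ν → Finset S) (y : ν → S) (𝒯 : Set (Set ν)) : Set (ν → S) :=
  {x | (∀ j, x j ∈ D j) ∧ {j | x j ≠ y j} ∈ 𝒯}

theorem patternCell_union :
    patternCell D y (𝒯 ∪ 𝒯') = patternCell D y 𝒯 ∪ patternCell D y 𝒯' := by
  ext x
  exact and_or_left

theorem disjoint_patternCell (h : Disjoint 𝒯 𝒯') :
    Disjoint (patternCell D y 𝒯) (patternCell D y 𝒯') :=
  disjoint_left.2 fun _ hx hx' ↦ disjoint_left.1 h hx.2 hx'.2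

theorem mem_patternCell_singleton_empty (hy : ∀ j, y j ∈ D j) {x : ν → S} :
    x ∈ patternCell D y {∅} ↔ x = y := by
  have differs_nowhere : {j | x j ≠ y j} = ∅ ↔ x = y := by
    simp [eq_empty_iff_forall_notMem, funext_iff]
  refine ⟨fun hx ↦ differs_nowhere.1 hx.2, ?_⟩
  rintro rfl
  exact ⟨hy, differs_nowhere.2 rfl⟩

theorem tileable_patternCell [DecidableEq ν] (hD : ∀ j, D j ∈ F) (j : ν)
    (hj : ∀ τ τ' : Set ν, (∀ k ≠ j, k ∈ τ ↔ k ∈ τ') → τ ∈ 𝒯 → τ' ∈ 𝒯) :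
    Tileable F (patternCell D y 𝒯) := by
  let V : Set (ν → S) := {x | (∀ k ≠ j, x k ∈ D k) ∧ {k | x k ≠ y k} ∈ 𝒯}
  have hV : DependsOn (· ∈ V) {j}ᶜ := by
    intro x x' hx
    have pattern_agrees : ∀ k ≠ j, k ∈ {k | x k ≠ y k} ↔ k ∈ {k | x' k ≠ y k} :=
      fun k hk ↦ by simp only [mem_ofPred_eq, hx k hk]
    exact propext (and_congr (forall₂_congr fun k hk ↦ by rw [hx k hk])
      ⟨hj _ _ pattern_agrees, hj _ _ fun k hk ↦ (pattern_agrees k hk).symm⟩)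
  have cell_eq : patternCell D y 𝒯 = V ∩ {x | x j ∈ D j} := by
    ext x
    refine ⟨fun hx ↦ ⟨⟨fun k _ ↦ hx.1 k, hx.2⟩, hx.1 j⟩, fun hx ↦ ⟨fun k ↦ ?_, hx.1.2⟩⟩
    rcases eq_or_ne k j with rfl | hk
    exacts [hx.2, hx.1.1 k hk]
  rw [cell_eq]
  exact tileable_line (hD j) (by simp) hV

end Patterns

/-- The coordinates of a box whose points are sorted into parts by the set of coordinates, called
a pattern, in which they differ from a given point, the hole. -/
inductive GadgetCoord (L : ℕ) : Type
  | spoke (i : Fin L)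
  | branch (a : Fin L)
  | apex
  deriving DecidableEq, Fintype

instance (L : ℕ) : Nonempty (GadgetCoord L) := ⟨.apex⟩

section Gadget

open GadgetCoord

variable {L : ℕ} {S : Type*} {F : Set (Finset S)}

/-- The patterns in which `i` is the only spoke and nothing else occurs. -/
def spokePattern (i : Fin L) : Set (Set (GadgetCoord L)) :=
  {τ | spoke ⁻¹' τ = {i} ∧ branch ⁻¹' τ = ∅ ∧ apex ∉ τ}

/-- The patterns of the parts that are exchanged against spokes: the empty one, marking the hole,
and, for each branch `a`, those containing `a` as the only branch, at most one spoke, and at least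
one of a spoke and the apex. -/
def branchPattern : Option (Fin L) → Set (Set (GadgetCoord L))
  | none => {∅}
  | some a => {τ | branch ⁻¹' τ = {a} ∧ (spoke ⁻¹' τ).Subsingleton ∧
      (apex ∈ τ ∨ (spoke ⁻¹' τ).Nonempty)}

theorem pairwise_disjoint_spokePattern :
    Pairwise (Disjoint on (spokePattern : Fin L → Set (Set (GadgetCoord L)))) :=
  fun _ _ hij ↦ disjoint_left.2 fun _ hi hj ↦ hij (singleton_injective (hi.1.symm.trans hj.1))

theorem pairwise_disjoint_branchPattern :
    Pairwise (Disjoint on (branchPattern : Option (Fin L) → Set (Set (GadgetCoord L)))) := by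
  intro a b hab
  refine disjoint_left.2 fun τ ha hb ↦ hab ?_
  cases a <;> cases b <;> simp_all [branchPattern]

theorem disjoint_branchPattern_spokePattern (a : Option (Fin L)) (i : Fin L) :
    Disjoint (branchPattern a) (spokePattern i) := by
  refine disjoint_left.2 fun τ ha hi ↦ ?_
  cases a with
  | none => simp_all [branchPattern, spokePattern, eq_comm]
  | some a => exact singleton_ne_empty a (ha.1.symm.trans hi.2.1)

theorem branchPattern_none_union_spokePattern (i : Fin L) :
    branchPattern none ∪ spokePattern i =
      {τ | spoke ⁻¹' τ ⊆ {i} ∧ branch ⁻¹' τ = ∅ ∧ apex ∉ τ} := by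
  ext τ
  have empty_iff : τ = ∅ ↔ spoke ⁻¹' τ = ∅ ∧ branch ⁻¹' τ = ∅ ∧ apex ∉ τ := by
    refine ⟨by rintro rfl; simp, fun ⟨hs, hb, ha⟩ ↦ eq_empty_of_forall_notMem ?_⟩
    rintro (k | k | _)
    exacts [fun hk ↦ hs.subset hk, fun hk ↦ hb.subset hk, ha]
  simp only [branchPattern, spokePattern, mem_union, mem_singleton_iff, mem_ofPred_eq, empty_iff,
    subset_singleton_iff_eq, or_and_right]

/-- The three pieces are invariant under toggling `branch a`, `spoke i` and `apex` respectively. -/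
theorem branchPattern_some_union_spokePattern (a i : Fin L) :
    branchPattern (some a) ∪ spokePattern i =
      {τ | branch ⁻¹' τ ⊆ {a} ∧ spoke ⁻¹' τ = {i} ∧ apex ∉ τ} ∪
      ({τ | branch ⁻¹' τ = {a} ∧ spoke ⁻¹' τ ⊆ {i} ∧ apex ∈ τ} ∪
      {τ | branch ⁻¹' τ = {a} ∧ ∃ k ≠ i, spoke ⁻¹' τ = {k}}) := by
  ext τ
  simp only [branchPattern, spokePattern, mem_union, mem_ofPred_eq, subset_singleton_iff_eq]
  constructor
  · rintro (⟨hb, hs, h⟩ | h)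
    · rcases hs.eq_empty_or_singleton with hs | ⟨k, hs⟩
      · simp_all
      · by_cases hk : k = i <;> by_cases apex ∈ τ <;> simp_all
    · simp_all
  · rintro (⟨hb, hs, ha⟩ | ⟨hb, hs, ha⟩ | ⟨hb, k, hk, hs⟩)
    · rcases hb with hb | hb <;> simp_all
    · rcases hs with hs | hs <;> simp_all
    · simp_all

theorem tileable_branch_union_spoke {D : GadgetCoord L → Finset S} (hD : ∀ j, D j ∈ F)
    (y : GadgetCoord L → S) (a : Option (Fin L)) (i : Fin L) :
    Tileable F (patternCell D y (branchPattern a) ∪ patternCell D y (spokePattern i)) := by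
  rw [← patternCell_union]
  cases a with
  | none =>
    rw [branchPattern_none_union_spokePattern]
    refine tileable_patternCell hD (spoke i) fun τ τ' h hτ ↦ ?_
    simp only [Set.ext_iff, mem_ofPred_eq, subset_def, mem_preimage] at *
    grind
  | some a =>
    rw [branchPattern_some_union_spokePattern, patternCell_union, patternCell_union]
    have branch_free : Tileable F (patternCell D y
        {τ | branch ⁻¹' τ ⊆ {a} ∧ spoke ⁻¹' τ = {i} ∧ apex ∉ τ}) := by
      refine tileable_patternCell hD (branch a) fun τ τ' h hτ ↦ ?_
      simp only [Set.ext_iff, mem_ofPred_eq, subset_def, mem_preimage] at *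
      grind
    have spoke_free : Tileable F (patternCell D y
        {τ | branch ⁻¹' τ = {a} ∧ spoke ⁻¹' τ ⊆ {i} ∧ apex ∈ τ}) := by
      refine tileable_patternCell hD (spoke i) fun τ τ' h hτ ↦ ?_
      simp only [Set.ext_iff, mem_ofPred_eq, subset_def, mem_preimage] at *
      grind
    have apex_free : Tileable F (patternCell D y
        {τ | branch ⁻¹' τ = {a} ∧ ∃ k ≠ i, spoke ⁻¹' τ = {k}}) := by
      refine tileable_patternCell hD apex fun τ τ' h ⟨hb, k, hk, hs⟩ ↦ ?_
      have preimage_spoke : spoke ⁻¹' τ' = spoke ⁻¹' τ := ext fun l ↦ (h (spoke l) nofun).symm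
      have preimage_branch : branch ⁻¹' τ' = branch ⁻¹' τ := ext fun l ↦ (h (branch l) nofun).symm
      exact ⟨preimage_branch.trans hb, k, hk, preimage_spoke.trans hs⟩
    refine branch_free.union (spoke_free.union apex_free (disjoint_patternCell ?_)) ?_
    · refine disjoint_left.2 fun τ ⟨_, hs, _⟩ ⟨_, k, hk, hs'⟩ ↦ ?_
      simp_all
    · rw [← patternCell_union]
      refine disjoint_patternCell (disjoint_left.2 ?_)
      rintro τ ⟨_, hs, ha⟩ (⟨_, _, ha'⟩ | ⟨_, k, hk, hs'⟩)
      · exact ha ha'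
      · exact hk (singleton_injective (hs'.symm.trans hs))

end Gadget

section Hole

variable {S : Type*} {F : Set (Finset S)}

theorem dependsOn_comp {ι ν : Type*} (U : Set (ν → S)) (g : ν → ι) :
    DependsOn (· ∈ {x : ι → S | x ∘ g ∈ U}) (range g) := fun x x' h ↦ by
  have comp_eq : x ∘ g = x' ∘ g := funext fun k ↦ h _ (mem_range_self k)
  simp [comp_eq]

theorem exists_hole_of_injective [DecidableEq S] [Finite S] (c : ModularCovers F)
    {g : GadgetCoord c.threshold → ℕ} (hg : Injective g) {I : Finset ℕ} (hI : (I : Set ℕ) = range g)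
    (y : ℕ → S) :
    ∃ G : Set (ℕ → S), DependsOn (· ∈ G) I ∧ y ∈ G ∧ Tileable F G ∧
      Tileable F (G \ {x | EqOn x y I}) := by
  choose D hD hy using c.exists_tile_mem
  let cell (𝒯 : Set (Set (GadgetCoord c.threshold))) : Set (ℕ → S) :=
    {x | x ∘ g ∈ patternCell (D ∘ y ∘ g) (y ∘ g) 𝒯}
  let X (a : Option (Fin c.threshold)) := cell (branchPattern a)
  let W (i : Fin c.threshold) := cell (spokePattern i)
  have hcell (𝒯) : DependsOn (· ∈ cell 𝒯) I := hI ▸ dependsOn_comp _ g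
  have disjoint_cell {𝒯 𝒯'} (h : Disjoint 𝒯 𝒯') : Disjoint (cell 𝒯) (cell 𝒯') :=
    (disjoint_patternCell h).preimage (· ∘ g)
  have hXX : Pairwise (Disjoint on X) :=
    fun _ _ hab ↦ disjoint_cell (pairwise_disjoint_branchPattern hab)
  have X_none : X none = {x | EqOn x y I} := by
    ext x
    refine (mem_patternCell_singleton_empty fun j ↦ hy _).trans ?_
    simp [hI, EqOn, funext_iff]
  have hXW (a i) : Disjoint (X a) (W i) := disjoint_cell (disjoint_branchPattern_spokePattern a i)
  have parts : IsPartSystem I (⋃ i ∈ Finset.univ, W i) X :=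
    isPartSystem_biUnion (fun a ↦ hcell _) (fun i ↦ hcell _) hXX hXW Finset.univ
  have exchange (E : Finset (Option (Fin c.threshold))) (hE : c.threshold ≤ E.card) :
      Tileable F (withParts (⋃ i ∈ Finset.univ, W i) X E) := by
    refine tileable_biUnion_union_biUnion (fun _ ↦ hcell _) (fun _ ↦ hcell _) hXX
      (fun _ _ hij ↦ disjoint_cell (pairwise_disjoint_spokePattern hij)) hXW (fun a i ↦ ?_) c hE
      (by simp)
    exact (tileable_branch_union_spoke (fun j ↦ hD _) (y ∘ g) a i).comp hg
  refine ⟨withParts (⋃ i ∈ Finset.univ, W i) X Finset.univ, parts.dependsOn_withParts _,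
    mem_withParts.2 (.inr ⟨none, Finset.mem_univ _, X_none ▸ fun _ _ ↦ rfl⟩),
    exchange _ (by simp), ?_⟩
  have remove_none := parts.withParts_sdiff Finset.univ {none}
  rw [Finset.set_biUnion_singleton, X_none] at remove_none
  rw [← remove_none]
  exact exchange _ (by simp [Finset.card_sdiff])

theorem exists_hole [DecidableEq S] [Finite S] (c : ModularCovers F) :
    ∃ n, ∀ I : Finset ℕ, I.card = n → ∀ y : ℕ → S, ∃ G : Set (ℕ → S), DependsOn (· ∈ G) I ∧
      y ∈ G ∧ Tileable F G ∧ Tileable F (G \ {x | EqOn x y I}) := by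
  refine ⟨Fintype.card (GadgetCoord c.threshold), fun I hI y ↦ ?_⟩
  let e : GadgetCoord c.threshold ≃ I := Fintype.equivOfCardEq (by simpa using hI.symm)
  refine exists_hole_of_injective c (Subtype.val_injective.comp e.injective) ?_ y
  rw [e.surjective.range_comp, Subtype.range_coe]

end Hole

section Tolerance

variable {S : Type*} {F : Set (Finset S)} {H : Set S} {N : ℕ}

/-- The cylinder over `H ⊆ S`, in the coordinate `0`, stays tileable after the removal of any set
`O` that is determined by `0` and the coordinates in `I`, if the number of patterns shown by `O` on
`I` falls short of `I.card` by at least `N`. -/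
def IsTolerant (F : Set (Finset S)) (H : Set S) (N : ℕ) : Prop :=
  ∀ I : Finset ℕ, 0 ∉ I → ∀ (Y : Finset (I → S)) (O : Set (ℕ → S)),
    DependsOn (· ∈ O) (insert 0 I : Finset ℕ) → (∀ x ∈ O, I.restrict x ∈ Y) →
    N + Y.card ≤ I.card → Tileable F ({x | x 0 ∈ H} \ O)

/-- The variant of `IsTolerant` in which the removed set shows a single pattern. -/
def IsOneTolerant (F : Set (Finset S)) (H : Set S) (N : ℕ) : Prop :=
  ∀ I : Finset ℕ, 0 ∉ I → ∀ (y : ℕ → S) (O : Set (ℕ → S)),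
    DependsOn (· ∈ O) (insert 0 I : Finset ℕ) → (∀ x ∈ O, EqOn x y I) →
    N ≤ I.card → Tileable F ({x | x 0 ∈ H} \ O)

theorem dependsOn_cylinder_sdiff {I : Finset ℕ} {O : Set (ℕ → S)}
    (hO : DependsOn (· ∈ O) (insert 0 I : Finset ℕ)) :
    DependsOn (· ∈ {x : ℕ → S | x 0 ∈ H} \ O) (insert 0 I : Finset ℕ) := fun x x' h ↦ by
  simp [hO h, h 0 (by simp)]

theorem exists_fiber_patterns {I : Finset ℕ} {i : ℕ} (hi : i ∈ I) {Y : Finset (I → S)}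
    {p q : I → S} (hp : p ∈ Y) (hq : q ∈ Y) (hpq : p ⟨i, hi⟩ ≠ q ⟨i, hi⟩) (s : S) :
    ∃ Y' : Finset (↥(I.erase i) → S), Y'.card < Y.card ∧
      ∀ x : ℕ → S, I.restrict (update x i s) ∈ Y → (I.erase i).restrict x ∈ Y' := by
  classical
  let Ys := Y.filter (· ⟨i, hi⟩ = s)
  have hYs : Ys.card < Y.card := by
    refine Finset.card_lt_card (Finset.filter_ssubset.2 ?_)
    by_cases hps : p ⟨i, hi⟩ = s
    · exact ⟨q, hq, fun hqs ↦ hpq (hps.trans hqs.symm)⟩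
    · exact ⟨p, hp, hps⟩
  refine ⟨Ys.image (Finset.restrict₂ (π := fun _ ↦ S) (I.erase_subset i)),
    Finset.card_image_le.trans_lt hYs, fun x hx ↦ ?_⟩
  refine Finset.mem_image.2 ⟨_, Finset.mem_filter.2 ⟨hx, by simp⟩, ?_⟩
  ext ⟨k, hk⟩
  simp [Finset.ne_of_mem_erase hk]

/-- Two different patterns on `I` differ in some `i ∈ I`, and each fiber over coordinate `i` meets
at most one of them. -/
theorem IsOneTolerant.isTolerant [Finite S] [Nonempty S] (h : IsOneTolerant F H N) :
    IsTolerant F H N := by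
  classical
  intro I hI Y O hO hOY hN
  induction hk : Y.card using Nat.strong_induction_on generalizing I O with
  | _ k ih =>
    subst hk
    rcases le_or_gt Y.card 1 with hY | hY
    · have exists_pattern : ∃ y, ∀ x ∈ O, EqOn x y I := by
        rcases O.eq_empty_or_nonempty with rfl | ⟨y, hy⟩
        · exact ⟨fun _ ↦ Classical.arbitrary S, by simp⟩
        · exact ⟨y, fun x hx i hi ↦
            congrFun (Finset.card_le_one.1 hY _ (hOY x hx) _ (hOY y hy)) ⟨i, hi⟩⟩
      obtain ⟨y, hy⟩ := exists_pattern
      exact h I hI y O hO hy (by omega)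
    obtain ⟨p, hp, q, hq, hpq⟩ := Finset.one_lt_card.1 hY
    obtain ⟨⟨i, hi⟩, hpqi⟩ := Function.ne_iff.1 hpq
    have hi0 : 0 ≠ i := (ne_of_mem_of_not_mem hi hI).symm
    refine tileable_of_fibers (dependsOn_cylinder_sdiff hO) i fun s ↦ ?_
    have fiber_eq : {x : ℕ → S | update x i s ∈ {x | x 0 ∈ H} \ O} =
        {x | x 0 ∈ H} \ {x | update x i s ∈ O} := by
      ext x
      simp [hi0]
    rw [fiber_eq]
    obtain ⟨Y', hY', restrict_mem⟩ := exists_fiber_patterns hi hp hq hpqi s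
    refine ih _ hY' _ (fun h0 ↦ hI (Finset.mem_of_mem_erase h0)) Y' _ ?_
      (fun x hx ↦ restrict_mem x (hOY _ hx)) ?_ rfl
    · intro x x' hx
      refine hO fun k hk ↦ ?_
      by_cases hki : k = i
      · simp [hki]
      · simpa [hki] using hx k (by simp_all)
    · rw [Finset.card_erase_of_mem hi]
      omega

section Enlarge

variable {I : Finset ℕ} {M R : Set (ℕ → S)} {D : Finset S}

theorem isPartSystem_patterns (hM : DependsOn (· ∈ M) I)
    (hR : DependsOn (· ∈ R) (insert 0 I : Finset ℕ)) :
    IsPartSystem (insert 0 I) ({x | x 0 ∈ H} \ R)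
      (fun p : I → S ↦ {x | x 0 ∈ (D : Set S) \ H ∧ x ∉ M ∧ I.restrict x = p}) where
  dependsOn_core := dependsOn_cylinder_sdiff hR
  dependsOn_part := fun p x x' h ↦ by
    have hI : ∀ i ∈ (I : Set ℕ), x i = x' i := fun i hi ↦ h i (by simp_all)
    simp [h 0 (by simp), hM hI, I.dependsOn_restrict hI]
  pairwise_disjoint := fun _ _ hpq ↦ disjoint_left.2 fun _ hp hq ↦ hpq (hp.2.2.symm.trans hq.2.2)
  disjoint_core := fun _ ↦ disjoint_left.2 fun _ hx hp ↦ hp.1.2 hx.1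

/-- A few of the parts over `D \ H` can be joined to the cylinder over `H`: complete them by the
lines through them with tile `D`, at the price of a few more patterns removed from the cylinder. -/
theorem IsTolerant.tileable_withParts (h : IsTolerant F H N) (hD : D ∈ F)
    (hI : 0 ∉ I) (hM : DependsOn (· ∈ M) I) (hR : DependsOn (· ∈ R) (insert 0 I : Finset ℕ))
    {Y : Finset (I → S)} (hRM : R ⊆ M) (hRY : ∀ x ∈ R, I.restrict x ∈ Y) (E : Finset (I → S))
    (hN : N + Y.card + E.card ≤ I.card) :
    Tileable F (withParts ({x | x 0 ∈ H} \ R)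
      (fun p : I → S ↦ {x | x 0 ∈ (D : Set S) \ H ∧ x ∉ M ∧ I.restrict x = p}) E) := by
  classical
  let L : Set (ℕ → S) := {x | x ∉ M ∧ I.restrict x ∈ E}
  have hL : DependsOn (· ∈ L) I := fun x x' hx ↦ by
    simp [L, hM hx, I.dependsOn_restrict hx]
  let lines := L ∩ {x | x 0 ∈ D}
  have split : withParts ({x | x 0 ∈ H} \ R)
      (fun p : I → S ↦ {x | x 0 ∈ (D : Set S) \ H ∧ x ∉ M ∧ I.restrict x = p}) E =
      lines ∪ ({x | x 0 ∈ H} \ (R ∪ lines)) := by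
    ext x
    have hx : x ∈ R → x ∈ M := @hRM x
    simp only [mem_withParts, lines, L, mem_union, mem_inter_iff, mem_sdiff, mem_ofPred_eq,
      Finset.mem_coe]
    grind
  rw [split]
  refine (tileable_line hD hI hL).union (h I hI (Y ∪ E) _ ?_ ?_ ?_) ?_
  · intro x x' hx
    simp [hR hx, lines, hL fun i hi ↦ hx i (by simp_all), hx 0 (by simp)]
  · rintro x (hx | hx)
    exacts [Finset.mem_union_left _ (hRY x hx), Finset.mem_union_right _ hx.1.2]
  · have := Finset.card_union_le Y E
    omega
  · exact disjoint_left.2 fun x hx hx' ↦ hx'.2 (.inr hx)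

theorem IsTolerant.tileable_union_sdiff [DecidableEq S] [Finite S] (h : IsTolerant F H N)
    (c : ModularCovers F) (hD : D ∈ F) (hI : 0 ∉ I) (hM : DependsOn (· ∈ M) I)
    (hR : DependsOn (· ∈ R) (insert 0 I : Finset ℕ)) {Y : Finset (I → S)} (hRM : R ⊆ M)
    (hMR : M ∩ {x | x 0 ∈ D} ⊆ R) (hRY : ∀ x ∈ R, I.restrict x ∈ Y)
    (hN : N + Y.card + c.threshold ≤ I.card) : Tileable F ({x | x 0 ∈ H ∪ D} \ R) := by
  classical
  cases nonempty_fintype S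
  have few (E : Finset (I → S)) (hE : E.card ≤ c.threshold) :=
    h.tileable_withParts hD hI hM hR hRM hRY E (by omega)
  have all := (isPartSystem_patterns (H := H) (D := D) hM hR).tileable_of_threshold_le c
    (fun E hE ↦ few E (hE.trans_le c.base_le_threshold)) Finset.univ
  have union_eq : {x | x 0 ∈ H ∪ D} \ R = withParts ({x | x 0 ∈ H} \ R)
      (fun p : I → S ↦ {x | x 0 ∈ (D : Set S) \ H ∧ x ∉ M ∧ I.restrict x = p}) Finset.univ := by
    ext x
    have hx : x ∈ R → x ∈ M := @hRM x
    have hx' : x ∈ M ∧ x 0 ∈ D → x ∈ R := @hMR x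
    simp only [mem_withParts, mem_union, mem_sdiff, mem_ofPred_eq, Finset.mem_coe,
      Finset.mem_univ, true_and, exists_and_left, exists_eq', and_true]
    tauto
  rw [union_eq]
  exact (le_total c.threshold (Finset.univ : Finset (I → S)).card).elim all (few _)

end Enlarge

theorem exists_patterns [Fintype S] {I J : Finset ℕ} (hJI : J ⊆ I) (y : ℕ → S) :
    ∃ Y : Finset (I → S), Y.card ≤ Fintype.card S ^ J.card ∧
      ∀ x : ℕ → S, EqOn x y (I \ J : Finset ℕ) → I.restrict x ∈ Y := by
  classical
  refine ⟨Finset.univ.filter fun p ↦ ∀ i : I, ↑i ∉ J → p i = y i, ?_, fun x hx ↦ ?_⟩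
  · have := Finset.card_le_card_of_injOn
      (s := Finset.univ.filter fun p : I → S ↦ ∀ i : I, ↑i ∉ J → p i = y i)
      (t := (Finset.univ : Finset (J → S))) (Finset.restrict₂ (π := fun _ ↦ S) hJI) (by simp) ?_
    · simpa using this
    intro p hp q hq hpq
    ext i
    simp only [Finset.coe_filter, Finset.mem_univ, true_and, mem_ofPred_eq] at hp hq
    by_cases hi : ↑i ∈ J
    · exact congrFun hpq ⟨i, hi⟩
    · rw [hp i hi, hq i hi]
  · simpa using fun i hi hiJ ↦ hx (by simp [hi, hiJ])

theorem tileable_inter_cylinder_sdiff {I J : Finset ℕ} (hI : 0 ∉ I) (hJI : J ⊆ I)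
    {y : ℕ → S} {G O : Set (ℕ → S)} (hG : DependsOn (· ∈ G) J) (hGt : Tileable F G)
    (hGy : Tileable F (G \ {x | EqOn x y J})) (hO : DependsOn (· ∈ O) (insert 0 I : Finset ℕ))
    (hOy : ∀ x ∈ O, EqOn x y I) (D : Set S) :
    Tileable F ((G ∩ {x | EqOn x y (I \ J : Finset ℕ)} ∩ {x | x 0 ∈ D}) \ O) := by
  let slice : Set S := {s | update y 0 s ∈ O}
  let C (Q : Set S) : Set (ℕ → S) := {x | EqOn x y (I \ J : Finset ℕ) ∧ x 0 ∈ Q}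
  have hC (Q : Set S) : DependsOn (· ∈ C Q) (insert 0 (I \ J) : Finset ℕ) := fun x x' h ↦ by
    have := dependsOn_eqOn y (I \ J : Finset ℕ) fun i hi ↦ h i (Finset.mem_insert_of_mem hi)
    simp only [C, mem_ofPred_eq, h 0 (by simp)] at this ⊢
    rw [this]
  have hJ : Disjoint J (insert 0 (I \ J)) :=
    Finset.disjoint_insert_right.2 ⟨fun h ↦ hI (hJI h), Finset.disjoint_sdiff⟩
  have hGy_dependsOn : DependsOn (· ∈ G \ {x | EqOn x y J}) J := fun x x' h ↦
    congrArg₂ (· ∧ ¬ ·) (hG h) (dependsOn_eqOn y J h)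
  have mem_O (x : ℕ → S) : x ∈ O ↔ EqOn x y I ∧ x 0 ∈ slice := by
    have agree (hx : EqOn x y I) : x ∈ O ↔ update y 0 (x 0) ∈ O := by
      refine (hO fun i hi ↦ ?_).to_iff
      rcases Finset.mem_insert.1 hi with rfl | hi
      · simp
      · simpa [ne_of_mem_of_not_mem hi hI] using hx hi
    exact ⟨fun h ↦ ⟨hOy x h, (agree (hOy x h)).1 h⟩, fun ⟨hx, hs⟩ ↦ (agree hx).2 hs⟩
  have eqOn_iff (x : ℕ → S) : EqOn x y I ↔ EqOn x y J ∧ EqOn x y (I \ J : Finset ℕ) := by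
    rw [← eqOn_union, ← Finset.coe_union, Finset.union_sdiff_of_subset hJI]
  have split : (G ∩ {x | EqOn x y (I \ J : Finset ℕ)} ∩ {x | x 0 ∈ D}) \ O =
      G ∩ C (D \ slice) ∪ (G \ {x | EqOn x y J}) ∩ C (D ∩ slice) := by
    ext x
    simp only [mem_sdiff, mem_inter_iff, mem_union, mem_ofPred_eq, mem_O, eqOn_iff, C]
    tauto
  rw [split]
  refine (hGt.inter hG (hC _) hJ).union (hGy.inter hGy_dependsOn (hC _) hJ) ?_
  exact disjoint_left.2 fun x hx hx' ↦ hx.2.2.2 hx'.2.2.2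

theorem IsTolerant.exists_isOneTolerant_union [DecidableEq S] [Finite S] (h : IsTolerant F H N)
    (c : ModularCovers F) {D : Finset S} (hD : D ∈ F) : ∃ N', IsOneTolerant F (H ∪ D) N' := by
  cases nonempty_fintype S
  obtain ⟨n, hole⟩ := exists_hole c
  refine ⟨N + Fintype.card S ^ n + c.threshold + n, fun I hI y O hO hOy hN ↦ ?_⟩
  obtain ⟨J, hJI, rfl⟩ := Finset.exists_subset_card_eq (s := I) (n := n) (by omega)
  obtain ⟨G, hG, hyG, hGt, hGy⟩ := hole J rfl y
  let M : Set (ℕ → S) := G ∩ {x | EqOn x y (I \ J : Finset ℕ)}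
  let R : Set (ℕ → S) := O ∪ M ∩ {x | x 0 ∈ D}
  have hM : DependsOn (· ∈ M) I := fun x x' hx ↦ congrArg₂ (· ∧ ·)
    (hG fun i hi ↦ hx i (hJI hi))
    (dependsOn_eqOn y (I \ J : Finset ℕ) fun i hi ↦ hx i (Finset.sdiff_subset hi))
  have hR : DependsOn (· ∈ R) (insert 0 I : Finset ℕ) := fun x x' hx ↦ by
    simp [R, hO hx, hM fun i hi ↦ hx i (Finset.mem_insert_of_mem hi), hx 0 (by simp)]
  have hOM : O ⊆ M := fun x hx ↦
    ⟨(hG fun i hi ↦ hOy x hx (hJI hi)).mpr hyG, (hOy x hx).mono (by simp)⟩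
  obtain ⟨Y, hY, hMY⟩ := exists_patterns hJI y
  have hRM : R ⊆ M := union_subset hOM inter_subset_left
  have rest : Tileable F ({x | x 0 ∈ H ∪ D} \ R) :=
    h.tileable_union_sdiff c hD hI hM hR hRM subset_union_right (fun x hx ↦ hMY x (hRM hx).2)
      (by omega)
  have split : {x | x 0 ∈ H ∪ D} \ O = (M ∩ {x | x 0 ∈ D}) \ O ∪ {x | x 0 ∈ H ∪ D} \ R := by
    ext x
    simp only [R, mem_sdiff, mem_union, mem_inter_iff, mem_ofPred_eq, Finset.mem_coe]
    tauto
  rw [split]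
  refine (tileable_inter_cylinder_sdiff hI hJI hG hGt hGy hO hOy D).union rest ?_
  exact disjoint_left.2 fun x hx hx' ↦ hx'.2 (.inr hx.1)

theorem isTolerant_empty : IsTolerant F ∅ 0 := fun I _ Y O _ _ _ ↦ by
  simpa using tileable_empty

theorem ModularCovers.tileable_univ [DecidableEq S] [Finite S] [Nonempty S]
    (c : ModularCovers F) : Tileable F (univ : Set (ℕ → S)) := by
  cases nonempty_fintype S
  choose D hD mem_D using c.exists_tile_mem
  have tolerant (Q : Finset S) : ∃ N, IsTolerant F (⋃ s ∈ Q, (D s : Set S)) N := by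
    induction Q using Finset.induction_on with
    | empty => exact ⟨0, by simpa using isTolerant_empty⟩
    | insert s Q _ ih =>
      obtain ⟨N, hN⟩ := ih
      rw [Finset.set_biUnion_insert, union_comm]
      obtain ⟨N', hN'⟩ := hN.exists_isOneTolerant_union c (hD s)
      exact ⟨N', hN'.isTolerant⟩
  obtain ⟨N, hN⟩ := tolerant Finset.univ
  have cover : ⋃ s ∈ Finset.univ, (D s : Set S) = univ :=
    eq_univ_of_forall fun s ↦ mem_biUnion (Finset.mem_univ s) (mem_D s)
  rw [cover] at hN
  simpa using hN (Finset.Ico 1 (N + 1)) (by simp) ∅ ∅ (fun _ _ _ ↦ rfl) (by simp) (by simp)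

end Tolerance

section Weight

variable {G : Type*} [AddCommGroup G]

/-- The sequence `W` with `∑ τ ∈ T with τ ≤ k, W (k - τ) = r` for all `k`, provided `0 ∈ T`. -/
def convSolution (T : Finset ℕ) (r : G) (k : ℕ) : G :=
  r - ∑ τ ∈ (T.filter fun τ ↦ 0 < τ ∧ τ ≤ k).attach, convSolution T r (k - τ)
termination_by k
decreasing_by
  have := (Finset.mem_filter.1 τ.2).2
  omega

variable {T : Finset ℕ} {r : G}

theorem convSolution_eq (k : ℕ) : convSolution T r k =
    r - ∑ τ ∈ T with 0 < τ ∧ τ ≤ k, convSolution T r (k - τ) := by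
  rw [convSolution, Finset.sum_attach _ fun τ ↦ convSolution T r (k - τ)]

theorem sum_convSolution (h0 : 0 ∈ T) (k : ℕ) :
    ∑ τ ∈ T with τ ≤ k, convSolution T r (k - τ) = r := by
  have erase_zero : (T.filter (· ≤ k)).erase 0 = T.filter fun τ ↦ 0 < τ ∧ τ ≤ k := by
    ext τ
    simp [Nat.pos_iff_ne_zero, and_left_comm]
  rw [← Finset.add_sum_erase _ _ (Finset.mem_filter.2 ⟨h0, k.zero_le⟩), erase_zero, Nat.sub_zero,
    convSolution_eq, sub_add_cancel]

theorem convSolution_add_eq {M a b : ℕ} (hM : ∀ τ ∈ T, τ ≤ M)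
    (h : ∀ i < M, convSolution T r (a + i) = convSolution T r (b + i)) (j : ℕ) :
    convSolution T r (a + j) = convSolution T r (b + j) := by
  induction j using Nat.strong_induction_on with
  | _ j ih =>
    rcases lt_or_ge j M with hj | hj
    · exact h j hj
    rw [convSolution_eq, convSolution_eq]
    refine congrArg (r - ·) (Finset.sum_congr (Finset.filter_congr fun τ hτ ↦ ?_) fun τ hτ ↦ ?_)
    · have := hM τ hτ
      omega
    · obtain ⟨hτ, hτ0, -⟩ := Finset.mem_filter.1 hτ
      have hτj : τ ≤ j := (hM τ hτ).trans hj
      rw [Nat.add_sub_assoc hτj, Nat.add_sub_assoc hτj]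
      exact ih _ (by omega)

theorem exists_periodic_convSolution [Finite G] {M : ℕ} (hM : ∀ τ ∈ T, τ ≤ M) (r : G) :
    ∃ a N, M < N ∧ Periodic (fun j ↦ convSolution T r (a + j)) N := by
  let window (k : ℕ) (i : Fin M) : G := convSolution T r (k * (M + 1) + i)
  obtain ⟨k, l, hkl, hwindow⟩ : ∃ k l, k < l ∧ window k = window l := by
    obtain ⟨k, l, hne, heq⟩ := Finite.exists_ne_map_eq_of_infinite window
    exact hne.lt_or_gt.elim (fun h ↦ ⟨k, l, h, heq⟩) fun h ↦ ⟨l, k, h, heq.symm⟩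
  obtain ⟨d, rfl⟩ := Nat.exists_eq_add_of_lt hkl
  refine ⟨k * (M + 1), (d + 1) * (M + 1), by nlinarith, fun j ↦ ?_⟩
  beta_reduce
  rw [convSolution_add_eq hM (fun i hi ↦ congrFun hwindow ⟨i, hi⟩) j]
  ring_nf

theorem exists_sum_sub_eq [Finite G] {M : ℕ} (h0 : 0 ∈ T) (hM : ∀ τ ∈ T, τ ≤ M) (r : G) :
    ∃ N, M < N ∧ ∃ w : ZMod N → G, ∀ s, ∑ τ ∈ T, w (s - (τ : ℕ)) = r := by
  obtain ⟨a, N, hMN, hperiodic⟩ := exists_periodic_convSolution hM r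
  have : NeZero N := ⟨by omega⟩
  have hτN : ∀ τ ∈ T, τ ≤ N := fun τ hτ ↦ (hM τ hτ).trans hMN.le
  refine ⟨N, hMN, fun s ↦ convSolution T r (a + s.val), fun s ↦ ?_⟩
  have val_sub : ∀ τ ∈ T, (s - (τ : ℕ)).val = (s.val + N - τ) % N := fun τ hτ ↦ by
    rw [← ZMod.val_natCast, Nat.cast_sub (le_add_left (hτN τ hτ))]
    simp
  have filter_eq : T.filter (· ≤ a + (s.val + N)) = T :=
    Finset.filter_true_of_mem fun τ hτ ↦ by have := hτN τ hτ; omega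
  calc ∑ τ ∈ T, convSolution T r (a + (s - (τ : ℕ)).val)
      = ∑ τ ∈ T, convSolution T r (a + (s.val + N) - τ) := Finset.sum_congr rfl fun τ hτ ↦ by
        rw [val_sub τ hτ, Nat.add_sub_assoc (le_add_left (hτN τ hτ))]
        exact hperiodic.map_mod_nat _
    _ = r := by
        simpa only [filter_eq] using sum_convSolution h0 (a + (s.val + N))

end Weight

section Translates

variable {A : Type*} [AddCommGroup A] [DecidableEq A] {T : Finset A}

theorem sum_filter_mem_vadd {B : Type*} [AddCommMonoid B] [Fintype A] (s : A) (g : A → B) :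
    ∑ a with s ∈ a +ᵥ T, g a = ∑ τ ∈ T, g (s - τ) := by
  have mem_iff (a : A) : s ∈ a +ᵥ T ↔ s - a ∈ T := by
    rw [← Finset.neg_vadd_mem_iff, vadd_eq_add, neg_add_eq_sub]
  refine (Finset.sum_nbij' (s - ·) (s - ·) ?_ ?_ ?_ ?_ ?_).symm <;> simp [mem_iff]

/-- Every translate of `T` taken once covers each point `T.card` times; taken with multiplicities
representing the weight `w`, the translates cover each point `1` time modulo `T.card`. -/
noncomputable def ModularCovers.ofWeight [Fintype A] {t : ℕ} [NeZero t] (ht : T.card = t)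
    (w : A → ZMod t) (hw : ∀ s, ∑ τ ∈ T, w (s - τ) = 1) :
    ModularCovers (range (· +ᵥ T : A → Finset A)) where
  t := t
  t_pos := NeZero.pos t
  uniform := Finset.univ.val.map (· +ᵥ T)
  residual := ∑ a, (w a).val • {a +ᵥ T}
  uniform_subset := by
    simp only [Multiset.mem_map, forall_exists_index, and_imp]
    rintro _ a - rfl
    exact mem_range_self a
  residual_subset D hD := by
    obtain ⟨a, -, ha⟩ := Multiset.mem_sum.1 hD
    exact ⟨a, (Multiset.mem_singleton.1 (Multiset.mem_of_mem_nsmul ha)).symm⟩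
  countP_uniform s := by
    rw [Multiset.countP_map, ← Finset.filter_val, Finset.card_val, Finset.card_eq_sum_ones,
      sum_filter_mem_vadd, ← Finset.card_eq_sum_ones, ht]
  countP_residual s := by
    rw [← ZMod.natCast_eq_natCast_iff, Nat.cast_one, ← hw s, ← sum_filter_mem_vadd,
      ← Multiset.coe_countPAddMonoidHom, map_sum, Finset.sum_filter, Nat.cast_sum]
    refine Finset.sum_congr rfl fun a _ ↦ ?_
    rw [map_nsmul, Multiset.coe_countPAddMonoidHom, ← Multiset.cons_zero, Multiset.countP_cons]
    split_ifs <;> simp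

end Translates

theorem exists_modularCovers_translates {T : Finset ℕ} (h0 : 0 ∈ T) :
    ∃ N, N ≠ 0 ∧ InjOn (Nat.cast : ℕ → ZMod N) T ∧
      Nonempty (ModularCovers (range fun a : ZMod N ↦ a +ᵥ T.image (Nat.cast : ℕ → ZMod N))) := by
  have : NeZero T.card := ⟨Finset.card_ne_zero_of_mem h0⟩
  have le_sup : ∀ τ ∈ T, τ ≤ T.sup id := fun τ hτ ↦ Finset.le_sup (f := id) hτ
  obtain ⟨N, hN, w, hw⟩ := exists_sum_sub_eq h0 le_sup (1 : ZMod T.card)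
  have : NeZero N := ⟨by omega⟩
  have injOn_cast : InjOn (Nat.cast : ℕ → ZMod N) T := fun τ hτ τ' hτ' h ↦
    Nat.ModEq.eq_of_lt_of_lt ((ZMod.natCast_eq_natCast_iff _ _ _).1 h)
      ((le_sup τ hτ).trans_lt hN) ((le_sup τ' hτ').trans_lt hN)
  refine ⟨N, NeZero.ne N, injOn_cast,
    ⟨.ofWeight (Finset.card_image_of_injOn injOn_cast) w fun s ↦ ?_⟩⟩
  rw [Finset.sum_image injOn_cast, hw]

theorem range_vadd_vadd {A : Type*} [AddCommGroup A] [DecidableEq A] (b : A) (T : Finset A) :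
    range (fun a : A ↦ a +ᵥ (b +ᵥ T)) = range fun a : A ↦ a +ᵥ T := by
  simp_rw [← add_vadd]
  exact (Equiv.addRight b).surjective.range_comp fun a ↦ a +ᵥ T

theorem exists_tileable_intCast_image {T : Finset ℤ} (hT : T.Nonempty) :
    ∃ N, InjOn (Int.cast : ℤ → ZMod N) T ∧
      Tileable (range fun a : ZMod N ↦ a +ᵥ T.image (Int.cast : ℤ → ZMod N))
        (univ : Set (ℕ → ZMod N)) := by
  let offset (τ : ℤ) : ℕ := (τ - T.min' hT).toNat
  have cast_offset : ∀ τ ∈ T, (offset τ : ℤ) = τ - T.min' hT := fun τ hτ ↦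
    Int.toNat_of_nonneg (sub_nonneg.2 (T.min'_le τ hτ))
  have zero_mem : 0 ∈ T.image offset :=
    Finset.mem_image.2 ⟨_, T.min'_mem hT, by simp [offset]⟩
  obtain ⟨N, hN, injOn_cast, ⟨c⟩⟩ := exists_modularCovers_translates zero_mem
  have : NeZero N := ⟨hN⟩
  have intCast_eq : ∀ τ ∈ T, (τ : ZMod N) = T.min' hT + (offset τ : ZMod N) := fun τ hτ ↦ by
    rw [← Int.cast_natCast (offset τ), cast_offset τ hτ, Int.cast_sub, add_sub_cancel]
  have image_eq : T.image (Int.cast : ℤ → ZMod N) =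
      (T.min' hT : ZMod N) +ᵥ (T.image offset).image (Nat.cast : ℕ → ZMod N) := by
    rw [Finset.image_image, Finset.vadd_finset_def, Finset.image_image]
    exact Finset.image_congr intCast_eq
  refine ⟨N, fun τ hτ τ' hτ' h ↦ ?_, ?_⟩
  · rw [intCast_eq τ hτ, intCast_eq τ' hτ', add_right_inj] at h
    have offset_eq : offset τ = offset τ' :=
      injOn_cast (Finset.mem_image_of_mem _ hτ) (Finset.mem_image_of_mem _ hτ') h
    rwa [← sub_left_inj, ← cast_offset τ hτ, ← cast_offset τ' hτ', Nat.cast_inj]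
  · rw [image_eq, range_vadd_vadd]
    exact c.tileable_univ

/-- The scalar product with `(1, r, r², …)` is injective on a finite set unless `r` is a root of one
of finitely many nonzero polynomials. -/
theorem exists_linearMap_injOn {R : Type*} [CommRing R] [IsDomain R] [Infinite R] {n : ℕ}
    (T : Finset (Fin n → R)) : ∃ φ : (Fin n → R) →ₗ[R] R, InjOn φ T := by
  classical
  let p : Polynomial R := ∏ q ∈ T.offDiag, Polynomial.ofFn n (q.1 - q.2)
  have p_ne_zero : p ≠ 0 := Finset.prod_ne_zero_iff.2 fun q hq ↦ by
    rw [← (Polynomial.ofFn n).map_zero, (Polynomial.injective_ofFn n).ne_iff, sub_ne_zero]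
    exact (Finset.mem_offDiag.1 hq).2.2
  obtain ⟨r, hr⟩ := Infinite.exists_notMem_finset p.roots.toFinset
  refine ⟨Polynomial.leval r ∘ₗ Polynomial.ofFn n, fun u hu v hv huv ↦ ?_⟩
  by_contra hne
  refine hr (Multiset.mem_toFinset.2 ((Polynomial.mem_roots p_ne_zero).2 ?_))
  rw [Polynomial.IsRoot, Polynomial.eval_prod]
  refine Finset.prod_eq_zero (i := (u, v)) (Finset.mem_offDiag.2 ⟨hu, hv, hne⟩) ?_
  rwa [← sub_eq_zero, ← map_sub] at huv

theorem exists_tileable_image {n : ℕ} {T : Finset (Fin n → ℤ)} (hT : T.Nonempty) :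
    ∃ (N : ℕ) (ψ : (Fin n → ℤ) →+ ZMod N), InjOn ψ T ∧
      Tileable (range fun a : ZMod N ↦ a +ᵥ T.image ψ) (univ : Set (ℕ → ZMod N)) := by
  obtain ⟨φ, injOn_φ⟩ := exists_linearMap_injOn T
  obtain ⟨N, injOn_cast, tileable⟩ := exists_tileable_intCast_image (hT.image φ)
  refine ⟨N, (Int.castAddHom (ZMod N)).comp φ.toAddMonoidHom, ?_, ?_⟩
  · exact injOn_cast.comp injOn_φ fun t ht ↦ Finset.mem_coe.2 (Finset.mem_image_of_mem φ ht)
  · rwa [Finset.image_image] at tileable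

theorem isPartition_range {α : Type*} {L : α → Set α} (mem_self : ∀ x, x ∈ L x)
    (eq_of_mem : ∀ x, ∀ y ∈ L x, L y = L x) : Setoid.IsPartition (range L) := by
  refine ⟨fun ⟨x, hx⟩ ↦ notMem_empty x (hx ▸ mem_self x), fun x ↦
    ⟨L x, ⟨⟨x, rfl⟩, mem_self x⟩, ?_⟩⟩
  rintro _ ⟨⟨y, rfl⟩, hxy⟩
  exact (eq_of_mem y x hxy).symm

section Pullback

variable {A G Z ι : Type*} [AddCommGroup A] [AddCommGroup G] [AddCommGroup Z] [DecidableEq A]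
  [DecidableEq ι] {J : Set ι} {T : Finset G} {ψ : G →+ A}

/-- If `z = b + ins j τ` and `Φ z j = a + ψ τ`, then `Φ` maps the copy `b + ins j T` of `T` through
`z` bijectively onto the line with tile `a + ψ T` in direction `j` through `Φ z`. -/
theorem TileableAlong.exists_isPartition (hψ : InjOn ψ T)
    (hJ : TileableAlong (range fun a : A ↦ a +ᵥ T.image ψ) J univ)
    {Φ : Z → ι → A} {ins : J → G →+ Z}
    (hΦ : ∀ z j g, Φ (z + ins j g) = update (Φ z) j (Φ z j + ψ g)) :
    ∃ P : Set (Set Z), Setoid.IsPartition P ∧ ∀ L ∈ P, ∃ j b, L = (fun t ↦ b + ins j t) '' T := by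
  obtain ⟨c, hc⟩ := hJ
  choose! base hbase using fun D (hD : D ∈ range fun a : A ↦ a +ᵥ T.image ψ) ↦ hD
  let a (z : Z) : A := base (c (Φ z)).2
  let j (z : Z) : J := ⟨(c (Φ z)).1, hc.dir_mem _ (mem_univ _)⟩
  have tile_eq (z : Z) : a z +ᵥ T.image ψ = (c (Φ z)).2 := hbase _ (hc.tile_mem _ (mem_univ _))
  have exists_apply_eq (z : Z) : ∃ τ ∈ T, a z + ψ τ = Φ z (j z) := by
    have := hc.apply_mem (Φ z) (mem_univ _)
    simpa [← tile_eq, Finset.mem_vadd_finset] using this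
  choose τ τ_mem apply_eq using exists_apply_eq
  let b (z : Z) : Z := z - ins (j z) (τ z)
  have map_eq (z : Z) (t : G) : Φ (b z + ins (j z) t) = update (Φ z) (j z) (a z + ψ t) := by
    rw [show b z + ins (j z) t = z + ins (j z) (t - τ z) by simp only [b, map_sub]; abel, hΦ,
      ← apply_eq, map_sub, add_assoc, add_sub_cancel]
  have label_eq (z : Z) {t : G} (ht : t ∈ T) : c (Φ (b z + ins (j z) t)) = c (Φ z) := by
    rw [map_eq]
    refine hc.label_update _ (mem_univ _) _ ?_
    rw [← tile_eq]
    exact Finset.vadd_mem_vadd_finset (Finset.mem_image_of_mem ψ ht)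
  refine ⟨_, isPartition_range (L := fun z ↦ (fun t ↦ b z + ins (j z) t) '' T)
    (fun z ↦ ⟨τ z, τ_mem z, sub_add_cancel _ _⟩) ?_, forall_mem_range.2 fun z ↦ ⟨j z, b z, rfl⟩⟩
  rintro z _ ⟨t, ht, rfl⟩
  set y := b z + ins (j z) t with hy
  have j_eq : j y = j z := Subtype.ext (congrArg Prod.fst (label_eq z ht))
  have τ_eq : τ y = t := hψ (τ_mem y) ht <| by
    have := apply_eq y
    rwa [j_eq, map_eq, update_self, show a y = a z by simp only [a, label_eq z ht, y],
      add_right_inj] at this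
  have b_eq : b y = b z := by
    rw [show b y = y - ins (j y) (τ y) from rfl, j_eq, τ_eq, hy, add_sub_cancel_right]
  change (fun t ↦ b y + ins (j y) t) '' T = _
  rw [j_eq, b_eq]

end Pullback

theorem TileableAlong.exists_isPartition_pi {A R ι κ m : Type*} [AddCommGroup A] [AddCommGroup R]
    [DecidableEq A] [DecidableEq ι] {J : Set ι} {T : Finset (m → R)} {ψ : (m → R) →+ A}
    (hψ : InjOn ψ T) (hJ : TileableAlong (range fun a : A ↦ a +ᵥ T.image ψ) J univ)
    (e : J × m ↪ κ) :
    ∃ P : Set (Set (κ → R)), Setoid.IsPartition P ∧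
      ∀ L ∈ P, ∃ (j : J) (b : κ → R),
        L = (fun t : m → R ↦ b + extend (fun i ↦ e (j, i)) t 0) '' T := by
  classical
  let ins (j : J) : (m → R) →+ κ → R := {
    toFun t := extend (fun i ↦ e (j, i)) t 0
    map_zero' := extend_zero _
    map_add' s t := by simpa using extend_add (fun i ↦ e (j, i)) s t 0 0 }
  let Φ (z : κ → R) (k : ι) : A := if h : k ∈ J then ψ fun i ↦ z (e (⟨k, h⟩, i)) else 0
  refine hJ.exists_isPartition (Φ := Φ) (ins := ins) hψ fun z j g ↦ funext fun k ↦ ?_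
  have ins_apply (i : m) : ins j g (e (j, i)) = g i :=
    (e.injective.comp (Prod.mk_right_injective j)).extend_apply g 0 i
  have ins_apply_of_ne {k : J} (hk : k ≠ j) (i : m) : ins j g (e (k, i)) = 0 :=
    extend_apply' _ _ _ fun ⟨i', h⟩ ↦ hk (congrArg Prod.fst (e.injective h)).symm
  obtain rfl | hkj := eq_or_ne k j
  · simp only [Φ, Subtype.coe_prop, dite_true, update_self, ← map_add, Pi.add_apply, ins_apply]
    rfl
  · rw [update_of_ne hkj]
    by_cases hk : k ∈ J
    · simp [Φ, hk, ins_apply_of_ne (k := ⟨k, hk⟩) fun h ↦ hkj (congrArg Subtype.val h)]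
    · simp [Φ, hk]

theorem isIsoCopy_image_add_extend {n d : ℕ} (T : Set (Fin n → ℤ)) {f : Fin n → Fin d}
    (hf : Injective f) (b : Fin d → ℤ) : IsIsoCopy T ((fun t ↦ b + extend f t 0) '' T) := by
  have hnd : n ≤ d := by simpa using Fintype.card_le_of_injective f hf
  obtain ⟨σ, hσ⟩ :=
    Equiv.Perm.exists_extending_pair f (Fin.castLE hnd) hf (Fin.castLE_injective hnd)
  refine ⟨σ, 1, b, fun _ ↦ Or.inl rfl, image_congr fun t _ ↦ funext fun k ↦ ?_⟩
  rw [Pi.add_apply, Pi.one_apply, one_mul, add_comm, add_left_inj]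
  by_cases hk : k ∈ range f
  · obtain ⟨i, rfl⟩ := hk
    simp [hf.extend_apply, embed, hσ]
  · have hσk : ¬ (σ k : ℕ) < n := fun h ↦ hk ⟨⟨σ k, h⟩, σ.injective (by simp [hσ])⟩
    simp [extend_apply' _ _ _ hk, embed, hσk]

end LineTiling

/-- main theorem, Chalcraft's conjecture: every finite
non-empty tile `T ⊆ ℤ^n` tiles `ℤ^d` for some `d ≥ 1`: `ℤ^d` partitions into
isometric copies of `T`. -/
theorem tiling_with_arbitrary_tiles {n : ℕ} (T : Set (Fin n → ℤ))
    (hfin : T.Finite) (hne : T.Nonempty) :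
    ∃ d : ℕ, 1 ≤ d ∧
      ∃ P : Set (Set (Fin d → ℤ)),
        (∀ S ∈ P, IsIsoCopy T S) ∧ P.PairwiseDisjoint id ∧
        ⋃₀ P = Set.univ := by
  lift T to Finset (Fin n → ℤ) using hfin
  obtain ⟨N, ψ, injOn_ψ, J, tileable⟩ := LineTiling.exists_tileable_image hne
  let e : J × Fin n ↪ Fin (Fintype.card (J × Fin n) + 1) :=
    (Fintype.equivFin _).toEmbedding.trans Fin.castSuccEmb
  obtain ⟨P, isPartition_P, hP⟩ := tileable.exists_isPartition_pi injOn_ψ e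
  refine ⟨_, Nat.succ_pos _, P, fun L hL ↦ ?_, isPartition_P.pairwiseDisjoint,
    isPartition_P.sUnion_eq_univ⟩
  obtain ⟨j, b, rfl⟩ := hP L hL
  exact LineTiling.isIsoCopy_image_add_extend _ (e.injective.comp (Prod.mk_right_injective j)) b
end
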